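/- arXiv:0901.1840 — 7 statements merged into one kernel-verified Lean document; each statement's English description precedes it below -/
import Mathlib

section
/- Let n ≥ 1 and let W be an invertible skew-symmetric real (2n)×(2n) matrix (Wᵀ = −W). Then there exists a real (2n)×(2n) matrix J with Jᵀ·J = 1 and J·J = −1 such that every real (2n)×(2n) matrix A with Aᵀ·A = 1, det A = 1 and Aᵀ·W·A = W commutes with J, i.e. A·J = J·A. (This expresses that the stabilizer in SO(2n) of a non-degenerate 2-form is contained in a subgroup of SO(2n) conjugate to U(n).) -/
open Matrix

open scoped MatrixOrder in
lemma exists_commuting_sqrt {m : ℕ} (W : Matrix (Fin m) (Fin m) ℝ) :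
    ∃ S : Matrix (Fin m) (Fin m) ℝ, Sᵀ = S ∧ S * S = Wᵀ * W ∧
      ∀ A : Matrix (Fin m) (Fin m) ℝ, Commute (Wᵀ * W) A → Commute S A := by
  have hP : (0 : Matrix (Fin m) (Fin m) ℝ) ≤ Wᵀ * W := by
    have := (Matrix.posSemidef_conjTranspose_mul_self W).nonneg
    simpa [Matrix.conjTranspose_eq_transpose_of_trivial] using this
  refine ⟨CFC.sqrt (Wᵀ * W), ?_, CFC.sqrt_mul_sqrt_self _ hP, ?_⟩
  · have h := (CFC.sqrt_nonneg (Wᵀ * W)).posSemidef.isHermitian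
    simpa [Matrix.IsHermitian, Matrix.conjTranspose_eq_transpose_of_trivial] using h
  · intro A hA
    rw [CFC.sqrt_eq_cfc]
    exact hA.cfc_nnreal _

/-- The stabilizer in `SO(2n)` of a non-degenerate 2-form is contained in a
subgroup of `SO(2n)` conjugate to `U(n)`: for any invertible skew-symmetric
real `(2n)×(2n)` matrix `W` there is an orthogonal complex structure `J`
commuting with every special orthogonal matrix preserving `W`. -/
theorem stabilizer_of_symplectic_form_in_unitary
    (n : ℕ) (hn : 1 ≤ n) (W : Matrix (Fin (2 * n)) (Fin (2 * n)) ℝ)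
    (hskew : Wᵀ = -W) (hinv : IsUnit W) :
    ∃ J : Matrix (Fin (2 * n)) (Fin (2 * n)) ℝ,
      Jᵀ * J = 1 ∧ J * J = -1 ∧
      ∀ A : Matrix (Fin (2 * n)) (Fin (2 * n)) ℝ,
        Aᵀ * A = 1 → A.det = 1 → Aᵀ * W * A = W → A * J = J * A := by
  obtain ⟨S, hS, hSS, hc⟩ := exists_commuting_sqrt W
  have hPu : IsUnit (S * S) := by
    rw [hSS, hskew]
    exact hinv.neg.mul hinv
  have hSd : IsUnit S.det := by
    have h := (Matrix.isUnit_iff_isUnit_det _).1 hPu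
    rw [Matrix.det_mul] at h
    exact isUnit_of_mul_isUnit_left h
  have h1 : S * S⁻¹ = 1 := Matrix.mul_nonsing_inv S hSd
  have h2 : S⁻¹ * S = 1 := Matrix.nonsing_inv_mul S hSd
  have hci : ∀ A, A * W = W * A → A * S⁻¹ = S⁻¹ * A := by
    intro A hA
    have hs : S * A = A * S := by
      refine hc A ?_
      have hcw : Commute W A := hA.symm
      rw [hskew]
      exact hcw.neg_left.mul_left hcw
    calc A * S⁻¹ = S⁻¹ * (S * A) * S⁻¹ := by rw [← mul_assoc S⁻¹, h2, one_mul]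
      _ = S⁻¹ * A * (S * S⁻¹) := by rw [hs]; simp only [mul_assoc]
      _ = S⁻¹ * A := by rw [h1, mul_one]
  have hWi := hci W rfl
  have hJt : (W * S⁻¹)ᵀ * (W * S⁻¹) = 1 := by
    rw [Matrix.transpose_mul, Matrix.transpose_nonsing_inv, hS]
    calc S⁻¹ * Wᵀ * (W * S⁻¹) = S⁻¹ * (Wᵀ * W) * S⁻¹ := by simp only [mul_assoc]
      _ = (S⁻¹ * S) * (S * S⁻¹) := by rw [← hSS]; simp only [mul_assoc]
      _ = 1 := by rw [h1, h2, one_mul]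
  have hJn : (W * S⁻¹)ᵀ = -(W * S⁻¹) := by
    rw [Matrix.transpose_mul, Matrix.transpose_nonsing_inv, hS, hskew, mul_neg, hWi]
  refine ⟨W * S⁻¹, hJt, ?_, ?_⟩
  · rw [hJn, neg_mul] at hJt
    rw [← hJt, neg_neg]
  · intro A hA _ hAW
    have hA' : A * Aᵀ = 1 := mul_eq_one_comm.1 hA
    have hcm : A * W = W * A := by
      calc A * W = A * (Aᵀ * W * A) := by rw [hAW]
        _ = (A * Aᵀ) * (W * A) := by simp only [mul_assoc]
        _ = W * A := by rw [hA', one_mul]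
    rw [← mul_assoc, hcm, mul_assoc, hci A hcm, mul_assoc]
end

section
/- Let n be a natural number and for each i ∈ {1,…,n} let sᵢ, tᵢ, bᵢ, cᵢ be complex numbers with Σᵢ bᵢ = 0 and Σᵢ cᵢ = 0. Let z, w ∈ ℂ be such that lᵢ := sᵢ·z + tᵢ·w ≠ 0 for every i. Then Σᵢ Σⱼ cᵢ·bⱼ·(sᵢ·tⱼ − tᵢ·sⱼ) / (lᵢ·lⱼ) = 0. -/
/-- For linear forms `lᵢ = sᵢ z + tᵢ w` on `ℂ²` and coefficients with
`∑ bᵢ = ∑ cᵢ = 0`, the 2-form `d log(∏ lᵢ^{cᵢ}) ∧ d log(∏ lᵢ^{bᵢ})` vanishes: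
`∑ᵢ ∑ⱼ cᵢ bⱼ (sᵢ tⱼ − tᵢ sⱼ)/(lᵢ lⱼ) = 0` at every point where all `lᵢ ≠ 0`. -/
theorem dlog_wedge_dlog_eq_zero
    (n : ℕ) (s t b c : Fin n → ℂ)
    (hb : ∑ i, b i = 0) (hc : ∑ i, c i = 0)
    (z w : ℂ) (hl : ∀ i, s i * z + t i * w ≠ 0) :
    ∑ i, ∑ j, c i * b j * (s i * t j - t i * s j) /
      ((s i * z + t i * w) * (s j * z + t j * w)) = 0 := by
  have key : ∀ a : Fin n → ℂ, ∑ i, a i = 0 →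
      z * (∑ i, a i * s i / (s i * z + t i * w)) +
        w * (∑ i, a i * t i / (s i * z + t i * w)) = 0 := by
    intro a ha
    rw [Finset.mul_sum, Finset.mul_sum, ← Finset.sum_add_distrib, ← ha]
    refine Finset.sum_congr rfl fun i _ => ?_
    have h : (a i * (s i * z + t i * w)) / (s i * z + t i * w) = a i :=
      mul_div_cancel_right₀ _ (hl i)
    calc _ = (a i * (s i * z + t i * w)) / (s i * z + t i * w) := by ring
      _ = a i := h
  have h1 := key c hc
  have h2 := key b hb
  have e : ∑ i, ∑ j, c i * b j * (s i * t j - t i * s j) /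
      ((s i * z + t i * w) * (s j * z + t j * w)) =
      (∑ i, c i * s i / (s i * z + t i * w)) * (∑ i, b i * t i / (s i * z + t i * w)) -
      (∑ i, c i * t i / (s i * z + t i * w)) * (∑ i, b i * s i / (s i * z + t i * w)) := by
    rw [Finset.sum_mul_sum, Finset.sum_mul_sum, ← Finset.sum_sub_distrib]
    refine Finset.sum_congr rfl fun i _ => ?_
    rw [← Finset.sum_sub_distrib]
    refine Finset.sum_congr rfl fun j _ => ?_
    rw [div_mul_div_comm, div_mul_div_comm, ← sub_div]
    congr 1
    ring
  by_cases hz : z = 0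
  · by_cases hw : w = 0
    · refine Finset.sum_eq_zero fun i _ => absurd ?_ (hl i)
      simp [hz, hw]
    · rw [e]
      generalize (∑ i, c i * s i / (s i * z + t i * w)) = P at *
      generalize (∑ i, c i * t i / (s i * z + t i * w)) = Q at *
      generalize (∑ i, b i * s i / (s i * z + t i * w)) = R at *
      generalize (∑ i, b i * t i / (s i * z + t i * w)) = S at *
      apply mul_left_cancel₀ hw
      linear_combination P * h2 - R * h1
  · rw [e]
    generalize (∑ i, c i * s i / (s i * z + t i * w)) = P at *
    generalize (∑ i, c i * t i / (s i * z + t i * w)) = Q at *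
    generalize (∑ i, b i * s i / (s i * z + t i * w)) = R at *
    generalize (∑ i, b i * t i / (s i * z + t i * w)) = S at *
    apply mul_left_cancel₀ hz
    linear_combination S * h1 - Q * h2
end

section
/- Let n be a natural number; for each i ∈ {1,…,n} let Aᵢ be a 2×2 complex matrix and (sᵢ,tᵢ) ∈ ℂ². Assume: (a) Σᵢ Aᵢ = λ·1 for some λ ∈ ℂ (the identities Σᵢ Aᵢ = (α−1)·Id of the paper), and (b) Aᵢ annihilates the vector (−tᵢ, sᵢ) for every i, i.e. Aᵢ·(−tᵢ, sᵢ)ᵀ = 0 (the kernel of Aᵢ contains the line sᵢz + tᵢw = 0). Then for every (z,w) ∈ ℂ² such that lᵢ := sᵢz + tᵢw ≠ 0 for all i, one has: (1) Σᵢ Σⱼ ((sᵢ·tⱼ − tᵢ·sⱼ)/(lᵢ·lⱼ)) · (Aᵢ·Aⱼ) = 0 (the curvature 2-form A ∧ A of the connection ∇ = d + Σᵢ Aᵢ·dlᵢ/lᵢ vanishes), and (2) Σᵢ (1/lᵢ) · Aᵢ·(−tᵢ, sᵢ)ᵀ = 0 (the torsion T(∂/∂z, ∂/∂w) of ∇ vanishes).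 Hence ∇ is flat and torsion-free. -/
/-- Proposition 4.10 of the paper, in coordinates: if `∑ᵢ Aᵢ = λ·Id` and each
`Aᵢ` annihilates the direction `(−tᵢ, sᵢ)` of the line `sᵢ z + tᵢ w = 0`, then
the connection `∇ = d + ∑ᵢ Aᵢ dlᵢ/lᵢ` on `ℂ²` is flat (its curvature 2-form
`A ∧ A` vanishes) and torsion-free. -/
theorem connection_flat_and_torsionFree
    (n : ℕ) (A : Fin n → Matrix (Fin 2) (Fin 2) ℂ) (s t : Fin n → ℂ) (lam : ℂ)
    (hsum : ∑ i, A i = lam • (1 : Matrix (Fin 2) (Fin 2) ℂ))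
    (hker : ∀ i, (A i).mulVec ![-(t i), s i] = 0)
    (z w : ℂ) (hl : ∀ i, s i * z + t i * w ≠ 0) :
    (∑ i, ∑ j, ((s i * t j - t i * s j) /
        ((s i * z + t i * w) * (s j * z + t j * w))) • (A i * A j) = 0) ∧
    (∑ i, ((s i * z + t i * w)⁻¹) • (A i).mulVec ![-(t i), s i] = 0) := by
  refine ⟨?_, by simp [hker]⟩
  obtain ⟨P, hP⟩ : ∃ P, P = ∑ i, (s i / (s i * z + t i * w)) • A i := ⟨_, rfl⟩
  obtain ⟨Q, hQ⟩ : ∃ Q, Q = ∑ i, (t i / (s i * z + t i * w)) • A i := ⟨_, rfl⟩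
  have hcurv : (∑ i, ∑ j, ((s i * t j - t i * s j) /
        ((s i * z + t i * w) * (s j * z + t j * w))) • (A i * A j)) = P * Q - Q * P := by
    rw [hP, hQ, Finset.sum_mul_sum, Finset.sum_mul_sum, ← Finset.sum_sub_distrib]
    refine Finset.sum_congr rfl fun i _ => ?_
    rw [← Finset.sum_sub_distrib]
    refine Finset.sum_congr rfl fun j _ => ?_
    rw [smul_mul_smul_comm, smul_mul_smul_comm, ← sub_smul, div_mul_div_comm,
      div_mul_div_comm, sub_div]
  have hlin : z • P + w • Q = lam • (1 : Matrix (Fin 2) (Fin 2) ℂ) := by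
    rw [← hsum, hP, hQ, Finset.smul_sum, Finset.smul_sum, ← Finset.sum_add_distrib]
    refine Finset.sum_congr rfl fun i _ => ?_
    rw [smul_smul, smul_smul, ← add_smul]
    have h : z * (s i / (s i * z + t i * w)) + w * (t i / (s i * z + t i * w)) = 1 := by
      have := hl i
      rw [← mul_div_assoc, ← mul_div_assoc, ← add_div, mul_comm z, mul_comm w, div_self this]
    rw [h, one_smul]
  have hz : z • (P * Q - Q * P) = 0 := by
    have h1 : z • P = lam • (1 : Matrix (Fin 2) (Fin 2) ℂ) - w • Q := by
      rw [← hlin]; abel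
    rw [smul_sub, ← smul_mul_assoc, ← mul_smul_comm, h1]
    simp [sub_mul, mul_sub]
  have hw : w • (P * Q - Q * P) = 0 := by
    have h1 : w • Q = lam • (1 : Matrix (Fin 2) (Fin 2) ℂ) - z • P := by
      rw [← hlin]; abel
    rw [smul_sub, ← mul_smul_comm, ← smul_mul_assoc, h1]
    simp [sub_mul, mul_sub]
  rcases smul_eq_zero.mp hz with z0 | h
  · rcases smul_eq_zero.mp hw with w0 | h
    · exact Finset.sum_eq_zero fun i _ => absurd (by simp [z0, w0]) (hl i)
    · rw [hcurv, h]
  · rw [hcurv, h]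
end

section
/- Let v₁, v₂, v₃ ∈ ℂ² be pairwise linearly independent vectors and let t₁, t₂, t₃ ∈ ℂ. Then there exists a unique triple (A₁, A₂, A₃) of 2×2 complex matrices such that Aᵢ·vᵢ = 0 and trace(Aᵢ) = tᵢ for i = 1,2,3, and A₁ + A₂ + A₃ = ((t₁ + t₂ + t₃)/2)·1. -/
lemma aux_nilp (x y p q r s : ℂ) (h : x ≠ 0 ∨ y ≠ 0) (h1 : p * x + q * y = 0)
    (h2 : r * x + s * y = 0) (h3 : p + s = 0) :
    ∃ c : ℂ, p = -c * x * y ∧ q = c * x ^ 2 ∧ r = -c * y ^ 2 ∧ s = c * x * y := by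
  obtain rfl : s = -p := by linear_combination h3
  rcases h with h | h
  · have hp : p = -q * y / x := by
      field_simp
      linear_combination h1
    have hr : r = p * y / x := by
      field_simp
      linear_combination h2
    refine ⟨q / x ^ 2, ?_, ?_, ?_, ?_⟩
    · rw [hp]; field_simp
    · field_simp
    · rw [hr, hp]; field_simp
    · rw [hp]; field_simp
  · have hp : p = r * x / y := by
      field_simp
      linear_combination -h2
    have hq : q = -p * x / y := by
      field_simp
      linear_combination h1
    refine ⟨-r / y ^ 2, ?_, ?_, ?_, ?_⟩
    · rw [hp]; field_simp
    · rw [hq, hp]; field_simp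
    · field_simp
    · rw [hp]; field_simp

lemma aux_det (u w : Fin 2 → ℂ) (h : LinearIndependent ℂ ![u, w]) :
    u 0 * w 1 - u 1 * w 0 ≠ 0 := by
  have h' : LinearIndependent ℂ (Matrix.row (Matrix.of ![u, w])) := h
  rw [Matrix.linearIndependent_rows_iff_isUnit, Matrix.isUnit_iff_isUnit_det,
    isUnit_iff_ne_zero, Matrix.det_fin_two] at h'
  simpa [mul_comm] using h'

lemma aux_vand (x1 y1 x2 y2 x3 y3 a b c : ℂ) (h12 : x1 * y2 - y1 * x2 ≠ 0)
    (h13 : x3 * y1 - y3 * x1 ≠ 0)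
    (e1 : a * x1 ^ 2 + b * x2 ^ 2 + c * x3 ^ 2 = 0)
    (e2 : a * x1 * y1 + b * x2 * y2 + c * x3 * y3 = 0)
    (e3 : a * y1 ^ 2 + b * y2 ^ 2 + c * y3 ^ 2 = 0) : a = 0 := by
  have : a * ((x1 * y2 - y1 * x2) * (x3 * y1 - y3 * x1)) = 0 := by
    linear_combination (-y2 * y3) * e1 + (x3 * y2 + x2 * y3) * e2 - x2 * x3 * e3
  exact (mul_eq_zero.mp this).resolve_right (mul_ne_zero h12 h13)

/-- The case `n = 3` of the system (6) of the paper: for three pairwise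
linearly independent vectors `v₁, v₂, v₃ ∈ ℂ²` and traces `t₁, t₂, t₃`, there
is a unique triple of `2×2` matrices `Aᵢ` with `Aᵢ vᵢ = 0`, `tr Aᵢ = tᵢ` and
`A₁ + A₂ + A₃ = ((t₁+t₂+t₃)/2)·Id`. -/
theorem residues_unique_for_three_lines
    (v : Fin 3 → (Fin 2 → ℂ))
    (hv : ∀ i j, i ≠ j → LinearIndependent ℂ ![v i, v j])
    (t : Fin 3 → ℂ) :
    ∃! A : Fin 3 → Matrix (Fin 2) (Fin 2) ℂ,
      (∀ i, (A i).mulVec (v i) = 0) ∧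
      (∀ i, (A i).trace = t i) ∧
      A 0 + A 1 + A 2 = ((t 0 + t 1 + t 2) / 2) • (1 : Matrix (Fin 2) (Fin 2) ℂ) := by
  have h12 := aux_det _ _ (hv 0 1 (by decide))
  have h23 := aux_det _ _ (hv 1 2 (by decide))
  have h31 := aux_det _ _ (hv 2 0 (by decide))
  apply existsUnique_of_exists_of_unique
  · let M : (Fin 2 → ℂ) → (Fin 2 → ℂ) → Matrix (Fin 2) (Fin 2) ℂ := fun a u =>
      !![-a 0 * u 1, a 0 * u 0; -a 1 * u 1, a 1 * u 0]
    obtain ⟨x, hx⟩ : ∃ x, x = (v 0 0 * v 1 1 - v 0 1 * v 1 0)⁻¹ := ⟨_, rfl⟩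
    obtain ⟨y, hy⟩ : ∃ y, y = (v 1 0 * v 2 1 - v 1 1 * v 2 0)⁻¹ := ⟨_, rfl⟩
    obtain ⟨z, hz⟩ : ∃ z, z = (v 2 0 * v 0 1 - v 2 1 * v 0 0)⁻¹ := ⟨_, rfl⟩
    have ex : x * (v 0 0 * v 1 1 - v 0 1 * v 1 0) = 1 := by rw [hx]; exact inv_mul_cancel₀ h12
    have ey : y * (v 1 0 * v 2 1 - v 1 1 * v 2 0) = 1 := by rw [hy]; exact inv_mul_cancel₀ h23
    have ez : z * (v 2 0 * v 0 1 - v 2 1 * v 0 0) = 1 := by rw [hz]; exact inv_mul_cancel₀ h31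
    obtain ⟨p, hp⟩ : ∃ p, p = (t 0 + t 1 + t 2) / 2 - t 0 := ⟨_, rfl⟩
    obtain ⟨q, hq⟩ : ∃ q, q = (t 0 + t 1 + t 2) / 2 - t 1 := ⟨_, rfl⟩
    obtain ⟨r, hr⟩ : ∃ r, r = (t 0 + t 1 + t 2) / 2 - t 2 := ⟨_, rfl⟩
    have t0 : t 0 = q + r := by rw [hq, hr]; ring
    have t1 : t 1 = p + r := by rw [hp, hr]; ring
    have t2 : t 2 = p + q := by rw [hp, hq]; ring
    refine ⟨![M ((r * x) • v 1 - (q * z) • v 2) (v 0), M ((p * y) • v 2 - (r * x) • v 0) (v 1),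
      M ((q * z) • v 0 - (p * y) • v 1) (v 2)], ?_, ?_, ?_⟩
    · intro i
      fin_cases i <;> ext j <;> fin_cases j <;>
        simp [M, Matrix.mulVec, dotProduct, Fin.sum_univ_two] <;> ring
    · intro i
      fin_cases i <;> simp [M, Matrix.trace, Fin.sum_univ_two, t0, t1, t2]
      · linear_combination r * ex + q * ez
      · linear_combination r * ex + p * ey
      · linear_combination p * ey + q * ez
    · rw [t0, t1, t2]
      ext i j
      fin_cases i <;> fin_cases j <;> simp [M]
      · linear_combination r * ex + p * ey + q * ez
      · ring
      · ring
      · linear_combination r * ex + p * ey + q * ez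
  · rintro A B ⟨a1, a2, a3⟩ ⟨b1, b2, b3⟩
    have nz : ∀ i, v i 0 ≠ 0 ∨ v i 1 ≠ 0 := by
      intro i
      by_contra! h
      have := aux_det _ _ (hv i (i + 1) (by fin_cases i <;> decide))
      simp [h.1, h.2] at this
    have key : ∀ i, ∃ c : ℂ, A i 0 0 - B i 0 0 = -c * v i 0 * v i 1 ∧
        A i 0 1 - B i 0 1 = c * v i 0 ^ 2 ∧ A i 1 0 - B i 1 0 = -c * v i 1 ^ 2 ∧
        A i 1 1 - B i 1 1 = c * v i 0 * v i 1 := by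
      intro i
      have p0 := congrFun (a1 i) 0
      have p1 := congrFun (a1 i) 1
      have q0 := congrFun (b1 i) 0
      have q1 := congrFun (b1 i) 1
      have p2 := a2 i
      have q2 := b2 i
      simp [Matrix.mulVec, dotProduct, Fin.sum_univ_two, Matrix.trace] at p0 p1 q0 q1 p2 q2
      apply aux_nilp _ _ _ _ _ _ (nz i)
      · linear_combination p0 - q0
      · linear_combination p1 - q1
      · linear_combination p2 - q2
    choose c k1 k2 k3 k4 using key
    have hs := a3.trans b3.symm
    have s01 := congrFun (congrFun hs 0) 1
    have s10 := congrFun (congrFun hs 1) 0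
    have s11 := congrFun (congrFun hs 1) 1
    simp only [Matrix.add_apply] at s01 s10 s11
    have e1 : c 0 * v 0 0 ^ 2 + c 1 * v 1 0 ^ 2 + c 2 * v 2 0 ^ 2 = 0 := by
      linear_combination s01 - k2 0 - k2 1 - k2 2
    have e2 : c 0 * v 0 0 * v 0 1 + c 1 * v 1 0 * v 1 1 + c 2 * v 2 0 * v 2 1 = 0 := by
      linear_combination s11 - k4 0 - k4 1 - k4 2
    have e3 : c 0 * v 0 1 ^ 2 + c 1 * v 1 1 ^ 2 + c 2 * v 2 1 ^ 2 = 0 := by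
      linear_combination -s10 + k3 0 + k3 1 + k3 2
    have c0 : c 0 = 0 := aux_vand _ _ _ _ _ _ _ _ _ h12 h31 e1 e2 e3
    have c1 : c 1 = 0 := aux_vand _ _ _ _ _ _ _ (c 2) (c 0) h23 h12
      (by linear_combination e1) (by linear_combination e2) (by linear_combination e3)
    have c2 : c 2 = 0 := aux_vand _ _ _ _ _ _ _ (c 0) (c 1) h31 h23
      (by linear_combination e1) (by linear_combination e2) (by linear_combination e3)
    have hc : ∀ i, c i = 0 := by
      intro i
      fin_cases i
      · exact c0
      · exact c1
      · exact c2
    funext i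
    ext j k
    have w1 := k1 i
    have w2 := k2 i
    have w3 := k3 i
    have w4 := k4 i
    simp only [hc i, neg_zero, zero_mul] at w1 w2 w3 w4
    fin_cases j <;> fin_cases k
    · exact sub_eq_zero.mp w1
    · exact sub_eq_zero.mp w2
    · exact sub_eq_zero.mp w3
    · exact sub_eq_zero.mp w4
end

section
/- Let L be a finite set of N pairwise distinct lines in ℂP² (2-dimensional ℂ-subspaces of ℂ³) such that every point lies on fewer than 2N/3 of the lines, i.e. 3·μ(p) < 2·N for every point p. Then, summing over the (finitely many) multiple points, 3·Σ_{p : μ(p) ≥ 2} μ(p) ≥ N² + 3N. -/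
section LineArrSection
open Polynomial

namespace LineArr

/-- shifted coefficients of a polynomial in `v` (inner) and `s` (outer) -/
noncomputable def gc (t s : ℂ) (f : ℂ[X][X]) (j k : ℕ) : ℂ :=
  (taylor t ((taylor (C s) f).coeff k)).coeff j

/-- weighted scaling -/
noncomputable def scal (p q : ℕ) : ℂ[X][X] →+* ℂ[X][X][X] :=
  eval₂RingHom (S := ℂ[X][X][X]) (eval₂RingHom (S := ℂ[X][X][X]) ((C : ℂ[X][X] →+* ℂ[X][X][X]).comp
    ((C : ℂ[X] →+* ℂ[X][X]).comp (C : ℂ →+* ℂ[X])))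
    (C (C X) * X ^ p)) (C X * X ^ q)

lemma scal_coeff (p q : ℕ) (g : ℂ[X][X]) (e k j : ℕ) :
    (((scal p q g).coeff e).coeff k).coeff j =
      if p * j + q * k = e then (g.coeff k).coeff j else 0 := by
  induction g using Polynomial.induction_on' with
  | add a b ha hb =>
    rw [map_add]; simp only [coeff_add, ha, hb]; split_ifs <;> simp
  | monomial k0 P =>
    induction P using Polynomial.induction_on' with
    | add a b ha hb =>
      rw [map_add, map_add]; simp only [coeff_add, ha, hb]; split_ifs <;> simp
    | monomial j0 a =>
      have : scal p q (monomial k0 (monomial j0 a)) =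
          C (C (monomial j0 a) * X ^ k0) * X ^ (p * j0 + q * k0) := by
        simp only [scal, coe_eval₂RingHom, eval₂_monomial, RingHom.coe_comp, Function.comp_apply]
        rw [← C_mul_X_pow_eq_monomial]
        simp only [map_mul, map_pow]
        ring
      rw [this]
      rw [coeff_C_mul, coeff_X_pow]
      by_cases h1 : e = p * j0 + q * k0
      · rw [if_pos h1, mul_one, coeff_C_mul, coeff_X_pow, coeff_monomial]
        by_cases h2 : k = k0
        · subst h2
          rw [if_pos rfl, mul_one, if_pos rfl, coeff_monomial]
          by_cases h3 : j0 = j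
          · subst h3; simp [h1]
          · simp [h3]
        · simp [h2, Ne.symm h2]
      · rw [if_neg h1]
        simp only [mul_zero, coeff_zero, coeff_monomial]
        split_ifs with h2 h3
        · subst h3
          rw [coeff_monomial]
          split_ifs with h4
          · subst h4; omega
          · rfl
        · simp
        · rfl

/-- shifting the centre to `(t, s)` -/
noncomputable def shft (t s : ℂ) : ℂ[X][X] →+* ℂ[X][X] :=
  (mapRingHom ((taylorAlgHom t : ℂ[X] →ₐ[ℂ] ℂ[X]) : ℂ[X] →+* ℂ[X])).comp
    ((taylorAlgHom (C s) : ℂ[X][X] →ₐ[ℂ[X]] ℂ[X][X]) : ℂ[X][X] →+* ℂ[X][X])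

lemma shft_coeff (t s : ℂ) (f : ℂ[X][X]) (j k : ℕ) :
    ((shft t s f).coeff k).coeff j = gc t s f j k := by
  change ((Polynomial.map ((taylorAlgHom t : ℂ[X] →ₐ[ℂ] ℂ[X]) : ℂ[X] →+* ℂ[X]) (taylor (C s) f)).coeff k).coeff j = _
  rw [coeff_map]; rfl

lemma shft_inj (t s : ℂ) : Function.Injective (shft t s) := by
  have h1 : Function.Injective ((taylorAlgHom t : ℂ[X] →ₐ[ℂ] ℂ[X]) : ℂ[X] →+* ℂ[X]) :=
    taylor_injective t
  have h2 : Function.Injective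
      ((taylorAlgHom (C s) : ℂ[X][X] →ₐ[ℂ[X]] ℂ[X][X]) : ℂ[X][X] →+* ℂ[X][X]) :=
    taylor_injective (C s)
  intro a b h
  exact h2 (Polynomial.map_injective _ h1 h)

noncomputable def theta (p q : ℕ) (t s : ℂ) : ℂ[X][X] →+* ℂ[X][X][X] := (scal p q).comp (shft t s)

lemma theta_coeff (p q : ℕ) (t s : ℂ) (f : ℂ[X][X]) (e k j : ℕ) :
    (((theta p q t s f).coeff e).coeff k).coeff j =
      if p * j + q * k = e then gc t s f j k else 0 := by
  rw [← shft_coeff]; exact scal_coeff p q _ e k j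

lemma exists_gc_ne {f : ℂ[X][X]} (hf : f ≠ 0) (t s : ℂ) : ∃ j k, gc t s f j k ≠ 0 := by
  by_contra! h
  apply hf
  apply shft_inj t s
  rw [map_zero]
  ext k j
  rw [shft_coeff, h]; simp

lemma theta_ne_zero (p q : ℕ) (t s : ℂ) {f : ℂ[X][X]} (hf : f ≠ 0) : theta p q t s f ≠ 0 := by
  intro h
  obtain ⟨j, k, hjk⟩ := exists_gc_ne hf t s
  apply hjk
  have := theta_coeff p q t s f (p * j + q * k) k j
  rw [if_pos rfl, h] at this
  simpa using this.symm

/-- weighted order -/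
noncomputable def wt (p q : ℕ) (t s : ℂ) (f : ℂ[X][X]) : ℕ := (theta p q t s f).natTrailingDegree

lemma wt_mul (p q : ℕ) (t s : ℂ) {f g : ℂ[X][X]} (hf : f ≠ 0) (hg : g ≠ 0) :
    wt p q t s (f * g) = wt p q t s f + wt p q t s g := by
  unfold wt
  rw [map_mul, natTrailingDegree_mul (theta_ne_zero p q t s hf) (theta_ne_zero p q t s hg)]

lemma wt_le {p q : ℕ} {t s : ℂ} {f : ℂ[X][X]} {j k : ℕ} (h : gc t s f j k ≠ 0) :
    wt p q t s f ≤ p * j + q * k := by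
  apply natTrailingDegree_le_of_ne_zero
  intro h0
  apply h
  have := theta_coeff p q t s f (p * j + q * k) k j
  rw [if_pos rfl, h0] at this
  simpa using this.symm

lemma le_wt {p q : ℕ} {t s : ℂ} {f : ℂ[X][X]} (hf : f ≠ 0) {e : ℕ}
    (h : ∀ j k, gc t s f j k ≠ 0 → e ≤ p * j + q * k) : e ≤ wt p q t s f := by
  apply le_natTrailingDegree (theta_ne_zero p q t s hf)
  intro m hm
  ext k j
  rw [theta_coeff]
  split_ifs with h1
  · by_contra h2
    have := h j k (by simpa using h2)
    omega
  · simp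

/-- total degree -/
noncomputable def tdeg (f : ℂ[X][X]) : ℕ := (theta 1 1 0 0 f).natDegree

lemma tdeg_mul {f g : ℂ[X][X]} (hf : f ≠ 0) (hg : g ≠ 0) :
    tdeg (f * g) = tdeg f + tdeg g := by
  unfold tdeg
  rw [map_mul, natDegree_mul (theta_ne_zero 1 1 0 0 hf) (theta_ne_zero 1 1 0 0 hg)]

lemma gc_zero_zero (f : ℂ[X][X]) (j k : ℕ) : gc 0 0 f j k = (f.coeff k).coeff j := by
  simp [gc]

lemma le_tdeg {f : ℂ[X][X]} {j k : ℕ} (h : (f.coeff k).coeff j ≠ 0) : j + k ≤ tdeg f := by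
  apply le_natDegree_of_ne_zero
  intro h0
  apply h
  have := theta_coeff 1 1 0 0 f (j + k) k j
  rw [if_pos (by ring), h0, gc_zero_zero] at this
  simpa using this.symm

lemma tdeg_le {f : ℂ[X][X]} {e : ℕ}
    (h : ∀ j k, (f.coeff k).coeff j ≠ 0 → j + k ≤ e) : tdeg f ≤ e := by
  apply natDegree_le_iff_coeff_eq_zero.2
  intro m hm
  ext k j
  rw [theta_coeff, gc_zero_zero]
  split_ifs with h1
  · by_contra h2
    have := h j k (by simpa using h2)
    omega
  · simp

/-- filtration on `ℂ[X]` -/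
noncomputable def filt (c : ℤ) (t : ℂ) (e : ℤ) : AddSubgroup ℂ[X] where
  carrier := {P | ∀ l : ℕ, (taylor t P).coeff l ≠ 0 → e ≤ c * l}
  zero_mem' := by intro l; simp
  add_mem' := by
    intro a b ha hb l hl
    by_cases h : (taylor t a).coeff l = 0
    · apply hb; intro h'; apply hl; simp [h, h']
    · exact ha l h
  neg_mem' := by
    intro a ha l hl
    apply ha; simpa using hl

lemma mem_filt {c : ℤ} {t : ℂ} {e : ℤ} {P : ℂ[X]} :
    P ∈ filt c t e ↔ ∀ l : ℕ, (taylor t P).coeff l ≠ 0 → e ≤ c * l := Iff.rfl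

lemma filt_mul {c : ℤ} {t : ℂ} {e e' : ℤ} {P Q : ℂ[X]} (hP : P ∈ filt c t e)
    (hQ : Q ∈ filt c t e') : P * Q ∈ filt c t (e + e') := by
  intro l hl
  rw [taylor_mul, coeff_mul] at hl
  obtain ⟨x, hx, hne⟩ := Finset.exists_ne_zero_of_sum_ne_zero hl
  have h1 := hP x.1 (left_ne_zero_of_mul hne)
  have h2 := hQ x.2 (right_ne_zero_of_mul hne)
  have := Finset.HasAntidiagonal.mem_antidiagonal.1 hx
  have : (l : ℤ) = x.1 + x.2 := by exact_mod_cast this.symm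
  rw [this]; linarith

lemma filt_one (c : ℤ) (t : ℂ) : (1 : ℂ[X]) ∈ filt c t 0 := by
  intro l hl
  rw [taylor_one, map_one, coeff_one] at hl
  split_ifs at hl with h
  · subst h; simp
  · simp at hl

lemma filt_prod {ι : Type*} {c : ℤ} {t : ℂ} (S : Finset ι) (e : ι → ℤ) (P : ι → ℂ[X])
    (h : ∀ i ∈ S, P i ∈ filt c t (e i)) : ∏ i ∈ S, P i ∈ filt c t (∑ i ∈ S, e i) := by
  classical
  induction S using Finset.induction_on with
  | empty => simpa using filt_one c t
  | insert a S ha ih =>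
    rw [Finset.prod_insert ha, Finset.sum_insert ha]
    exact filt_mul (h a (by simp)) (ih fun i hi => h i (by simp [hi]))

lemma filt_det {d : ℕ} {c : ℤ} {t : ℂ} (M : Matrix (Fin d) (Fin d) ℂ[X]) (r k : Fin d → ℤ)
    (h : ∀ i j, M i j ∈ filt c t (r i + k j)) : M.det ∈ filt c t (∑ i, r i + ∑ j, k j) := by
  rw [Matrix.det_apply]
  apply AddSubgroup.sum_mem
  intro σ _
  have : ∏ i, M (σ i) i ∈ filt c t (∑ i, r i + ∑ j, k j) := by
    have := filt_prod (c := c) (t := t) Finset.univ (fun i => r (σ i) + k i)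
      (fun i => M (σ i) i) (fun i _ => h _ _)
    rw [Finset.sum_add_distrib, Equiv.sum_comp σ r] at this
    exact this
  rcases Int.units_eq_one_or (Equiv.Perm.sign σ) with h | h
  · simpa [h] using this
  · rw [h]; simpa using this

lemma filt_resultant {c : ℤ} {t : ℂ} (f g : ℂ[X][X]) (m n : ℕ) (α α' γ : ℤ)
    (hf : ∀ k : ℕ, f.coeff k ∈ filt c t (α - γ * k))
    (hg : ∀ k : ℕ, g.coeff k ∈ filt c t (α' - γ * k)) :
    resultant f g m n ∈ filt c t (n * α + m * α' - γ * (m * n)) := by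
  have key := filt_det (c := c) (t := t) (sylvester f g m n) (fun i => -γ * (i : ℕ))
    (fun j => Fin.addCases (fun j₁ : Fin m => α' + γ * (j₁ : ℕ)) (fun j₁ : Fin n => α + γ * (j₁ : ℕ)) j)
    (by
      intro i j
      induction j using Fin.addCases with
      | left j =>
        simp only [sylvester, Matrix.of_apply, Fin.addCases_left]
        split_ifs with h
        · have := hg (i - j)
          rw [Set.mem_Icc] at h
          rw [Nat.cast_sub h.1] at this
          convert this using 2; ring
        · exact zero_mem _
      | right j =>
        simp only [sylvester, Matrix.of_apply, Fin.addCases_right]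
        split_ifs with h
        · have := hf (i - j)
          rw [Set.mem_Icc] at h
          rw [Nat.cast_sub h.1] at this
          convert this using 2; ring
        · exact zero_mem _)
  unfold resultant
  convert key using 2
  rw [Fin.sum_univ_add, Fin.sum_univ_add]
  simp only [Fin.addCases_left, Fin.addCases_right, Fin.val_castAdd, Fin.val_natAdd, 
    Finset.sum_add_distrib, Finset.sum_const, Finset.card_univ, Fintype.card_fin, nsmul_eq_mul,
    ← Finset.mul_sum, Nat.cast_add]
  ring

end LineArr

namespace LineArr

/-- the second partial derivative of the homogenised form -/
noncomputable def hh {R : Type*} [CommRing R] (g : R[X]) : R[X] :=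
  (g.natDegree : R[X]) * g - X * derivative g

lemma hh_coeff {R : Type*} [CommRing R] (g : R[X]) (k : ℕ) :
    (hh g).coeff k = ((g.natDegree : R) - k) * g.coeff k := by
  unfold hh
  rw [coeff_sub, ← C_eq_natCast, coeff_C_mul]
  cases k with
  | zero => simp
  | succ k => rw [coeff_X_mul, coeff_derivative]; push_cast; ring

lemma hh_natDegree {R : Type*} [CommRing R] (g : R[X]) : (hh g).natDegree ≤ g.natDegree - 1 := by
  rw [natDegree_le_iff_coeff_eq_zero]
  intro m hm
  rw [hh_coeff]
  by_cases h : m = g.natDegree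
  · subst h; simp
  · rw [coeff_eq_zero_of_natDegree_lt (by omega), mul_zero]

noncomputable def rho {R : Type*} [CommRing R] (g : R[X]) : R :=
  resultant (derivative g) (hh g) (g.natDegree - 1) (g.natDegree - 1)

lemma taylor_derivative' {R : Type*} [CommRing R] (g : R[X]) (r : R) :
    taylor r (derivative g) = derivative (taylor r g) := by
  simp [taylor_apply, derivative_comp]

lemma rho_taylor {R : Type*} [CommRing R] [IsDomain R] [CharZero R] (g : R[X]) (r : R) :
    rho (taylor r g) = rho g := by
  unfold rho
  have hd : (taylor r g).natDegree = g.natDegree := natDegree_taylor g r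
  have h1 : hh (taylor r g) = taylor r (hh g) + derivative (taylor r g) * C r := by
    unfold hh
    rw [hd, map_sub, taylor_mul, taylor_mul, taylor_X, taylor_derivative']
    have : taylor r ((g.natDegree : R[X])) = (g.natDegree : R[X]) := by
      rw [← C_eq_natCast, taylor_C]
    rw [this]; ring
  have hder : (derivative g).natDegree = g.natDegree - 1 := natDegree_derivative g
  rw [h1, hd, resultant_add_mul_right _ _ _ _ _ (by simp)
    ((natDegree_derivative_le _).trans (by rw [hd])), ← taylor_derivative']
  obtain ⟨k, hk⟩ := Nat.exists_eq_add_of_le (hh_natDegree g)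
  have e1 := resultant_add_right_deg (taylor r (derivative g)) (taylor r (hh g)) (g.natDegree - 1)
    (hh g).natDegree k (by rw [natDegree_taylor])
  have e2 := resultant_add_right_deg (derivative g) (hh g) (g.natDegree - 1)
    (hh g).natDegree k le_rfl
  rw [← hk] at e1 e2
  rw [e1, e2]
  have e3 := resultant_taylor (derivative g) (hh g) r
  rw [natDegree_taylor, natDegree_taylor, hder] at e3
  rw [e3]
  congr 2
  rw [← hder, coeff_taylor_natDegree, leadingCoeff]

lemma rho_map {R S : Type*} [CommRing R] [CommRing S] (φ : R →+* S) (hφ : Function.Injective φ)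
    (g : R[X]) : rho (g.map φ) = φ (rho g) := by
  unfold rho
  rw [← resultant_map_map, natDegree_map_eq_of_injective hφ, derivative_map]
  congr 1
  ext k
  rw [coeff_map, hh_coeff, hh_coeff, natDegree_map_eq_of_injective hφ]
  simp

lemma rho_ne_zero_field {K : Type*} [Field K] [CharZero K] (g : K[X]) (hg : g.Separable)
    (hb : g.natDegree ≠ 0) : rho g ≠ 0 := by
  unfold rho
  have hder : (derivative g).natDegree = g.natDegree - 1 := natDegree_derivative g
  obtain ⟨k, hk⟩ := Nat.exists_eq_add_of_le (hh_natDegree g)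
  have e2 := resultant_add_right_deg (derivative g) (hh g) (g.natDegree - 1)
    (hh g).natDegree k le_rfl
  rw [← hk] at e2
  rw [e2]
  have hd0 : derivative g ≠ 0 := by
    intro h
    exact hb (Polynomial.derivative_eq_zero.1 h)
  have hcop : IsCoprime (derivative g) (hh g) := by
    have h1 : IsCoprime (derivative g) ((g.natDegree : K[X]) * g) := by
      apply IsCoprime.mul_right
      · rw [← C_eq_natCast]
        refine ⟨0, C ((g.natDegree : K)⁻¹), ?_⟩
        rw [← C_mul, inv_mul_cancel₀ (Nat.cast_ne_zero.2 hb)]; simp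
      · exact hg.symm
    have := h1.add_mul_left_right (-X)
    unfold hh
    rwa [show (g.natDegree : K[X]) * g - X * derivative g =
      (g.natDegree : K[X]) * g + derivative g * (-X) by ring]
  have hr := resultant_ne_zero _ _ hcop
  rw [hder] at hr
  refine mul_ne_zero (pow_ne_zero _ ?_) hr
  rw [← hder]
  exact leadingCoeff_ne_zero.2 hd0

lemma rho_ne_zero (g : ℂ[X][X]) (hg : Irreducible g) (hb : g.natDegree ≠ 0) : rho g ≠ 0 := by
  have hprim : g.IsPrimitive := hg.isPrimitive hb
  have hirr := (hprim.irreducible_iff_irreducible_map_fraction_map (K := FractionRing ℂ[X])).1 hg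
  have hinj : Function.Injective (algebraMap ℂ[X] (FractionRing ℂ[X])) :=
    IsFractionRing.injective _ _
  haveI : CharZero (FractionRing ℂ[X]) := charZero_of_injective_algebraMap hinj
  have := rho_ne_zero_field _ hirr.separable (by rwa [natDegree_map_eq_of_injective hinj])
  rw [rho_map _ hinj] at this
  intro h; apply this; rw [h, map_zero]

lemma filt_natCast_mul {c : ℤ} {t : ℂ} {e : ℤ} {P : ℂ[X]} (r : ℂ) (hP : P ∈ filt c t e) :
    C r * P ∈ filt c t e := by
  intro l hl
  apply hP
  rw [taylor_mul, taylor_C, coeff_C_mul] at hl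
  exact right_ne_zero_of_mul hl

/-- the general estimate for the discriminant -/
lemma rho_filt {c : ℤ} {t : ℂ} (g : ℂ[X][X]) (hb : g.natDegree ≠ 0) (α γ : ℤ)
    (h : ∀ k : ℕ, g.coeff k ∈ filt c t (α - γ * k)) :
    rho g ∈ filt c t ((g.natDegree - 1 : ℕ) * (2 * α - γ * g.natDegree)) := by
  have key := filt_resultant (derivative g) (hh g) (g.natDegree - 1) (g.natDegree - 1)
    (α - γ) α γ (c := c) (t := t) (by
      intro k
      rw [coeff_derivative]
      have := filt_natCast_mul ((k : ℂ) + 1) (h (k + 1))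
      convert this using 1
      · congr 1; push_cast; ring
      · rw [mul_comm]; congr 1; simp) (by
      intro k
      rw [hh_coeff]
      have := filt_natCast_mul ((g.natDegree : ℂ) - k) (h k)
      convert this using 1
      congr 1; simp)
  unfold rho
  convert key using 2
  obtain ⟨d, hd⟩ := Nat.exists_eq_succ_of_ne_zero hb
  rw [hd]; simp only [Nat.succ_eq_add_one, Nat.add_sub_cancel]; push_cast; ring

lemma gc_filt (N q : ℕ) (t s : ℂ) (g : ℂ[X][X]) (k : ℕ) :
    (taylor (C s) g).coeff k ∈ filt N t ((wt N q t s g : ℤ) - q * k) := by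
  intro l hl
  have := wt_le (p := N) (q := q) (t := t) (s := s) (f := g) (j := l) (k := k) hl
  have : ((wt N q t s g : ℕ) : ℤ) ≤ N * l + q * k := by exact_mod_cast this
  linarith

lemma tdeg_filt (g : ℂ[X][X]) (k : ℕ) :
    g.coeff k ∈ filt (-1) 0 (-(tdeg g : ℤ) - (-1) * k) := by
  intro l hl
  rw [taylor_zero] at hl
  have := le_tdeg hl
  have : (l + k : ℤ) ≤ tdeg g := by exact_mod_cast this
  linarith

/-- orders of vanishing at distinct points are bounded by the degree -/
lemma sum_order_le {ι : Type*} [Fintype ι] (t : ι → ℂ) (ht : Function.Injective t) (P : ℂ[X])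
    (hP : P ≠ 0) : ∑ i, P.rootMultiplicity (t i) ≤ P.natDegree := by
  classical
  have h1 : ∑ i, P.rootMultiplicity (t i) = ∑ x ∈ Finset.univ.image t, P.roots.count x := by
    rw [Finset.sum_image (fun a _ b _ h => ht h)]
    simp
  rw [h1]
  have h2 : ∑ x ∈ Finset.univ.image t, P.roots.count x ≤
      ∑ x ∈ Finset.univ.image t ∪ P.roots.toFinset, P.roots.count x :=
    Finset.sum_le_sum_of_subset Finset.subset_union_left
  refine h2.trans ?_
  rw [Multiset.sum_count_eq_card (fun a ha => by simp [Multiset.mem_toFinset.2 ha])]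
  exact card_roots' P

lemma rootMult_coeff (P : ℂ[X]) (hP : P ≠ 0) (t : ℂ) :
    (taylor t P).coeff (P.rootMultiplicity t) ≠ 0 := by
  rw [rootMultiplicity_eq_natTrailingDegree]
  change coeff (P.comp (X + C t)) _ ≠ 0
  have : P.comp (X + C t) ≠ 0 := by
    rw [← taylor_apply]; simpa [taylor_eq_zero] using hP
  exact trailingCoeff_nonzero_iff_nonzero.2 this

end LineArr

namespace LineArr

lemma pot_big {ι : Type*} [Fintype ι] (s t : ι → ℂ) (ht : Function.Injective t)
    (g : ℂ[X][X]) (hg : Irreducible g) (hb : 2 ≤ g.natDegree) :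
    ∑ i, wt (Fintype.card ι) 3 (t i) (s i) g ≤ Fintype.card ι * (tdeg g + g.natDegree) := by
  set N := Fintype.card ι with hN
  have hρ := rho_ne_zero g hg (by omega)
  have h1 : (((g.natDegree - 1 : ℕ) : ℤ)) * (2 * (-(tdeg g : ℤ)) - (-1) * g.natDegree) ≤
      (-1) * ((rho g).natDegree : ℕ) := by
    have := rho_filt (c := -1) (t := 0) g (by omega) (-(tdeg g : ℤ)) (-1) (tdeg_filt g)
    apply this
    rw [taylor_zero]
    exact leadingCoeff_ne_zero.2 hρ
  have h2 : ∀ i, (((g.natDegree - 1 : ℕ) : ℤ)) * (2 * (wt N 3 (t i) (s i) g : ℤ) - 3 * g.natDegree) ≤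
      N * ((rho g).rootMultiplicity (t i) : ℕ) := by
    intro i
    have := rho_filt (c := N) (t := t i) (taylor (C (s i)) g) (by rw [natDegree_taylor]; omega)
      (wt N 3 (t i) (s i) g) 3 (fun k => by simpa using gc_filt N 3 (t i) (s i) g k)
    rw [rho_taylor, natDegree_taylor] at this
    exact this _ (rootMult_coeff _ hρ _)
  have h3 := Finset.sum_le_sum (s := Finset.univ) (fun i _ => h2 i)
  rw [← Finset.mul_sum, ← Finset.mul_sum, Finset.sum_sub_distrib, ← Finset.mul_sum] at h3
  simp only [Finset.sum_const, Finset.card_univ, nsmul_eq_mul, ← hN] at h3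
  have h4 : (∑ i, ((rho g).rootMultiplicity (t i) : ℤ)) ≤ ((rho g).natDegree : ℤ) := by
    exact_mod_cast sum_order_le t ht _ hρ
  have hb1 : (((g.natDegree - 1 : ℕ) : ℤ)) > 0 := by omega
  set c : ℤ := (((g.natDegree - 1 : ℕ) : ℤ))
  have hNn : (0 : ℤ) ≤ N := by positivity
  have h5 : c * (2 * ∑ i, (wt N 3 (t i) (s i) g : ℤ) - N * (3 * g.natDegree)) ≤
      c * (N * (2 * tdeg g - g.natDegree)) := by
    calc _ ≤ _ := h3
      _ ≤ (N : ℤ) * (rho g).natDegree := by gcongr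
      _ ≤ N * (c * (2 * tdeg g - g.natDegree)) := by
        apply mul_le_mul_of_nonneg_left _ hNn; linarith
      _ = _ := by ring
  have h6 := le_of_mul_le_mul_left h5 hb1
  have : (∑ i, (wt N 3 (t i) (s i) g : ℤ)) ≤ N * (tdeg g + g.natDegree) := by linarith
  exact_mod_cast this

lemma pot_zero {ι : Type*} [Fintype ι] (s t : ι → ℂ) (ht : Function.Injective t)
    (g : ℂ[X][X]) (hg : g ≠ 0) (hb : g.natDegree = 0) :
    ∑ i, wt (Fintype.card ι) 3 (t i) (s i) g ≤ Fintype.card ι * (tdeg g + g.natDegree) := by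
  set N := Fintype.card ι with hN
  obtain ⟨P, rfl⟩ := natDegree_eq_zero.1 hb
  have hP : P ≠ 0 := by rintro rfl; simp at hg
  have h2 : ∀ i, wt N 3 (t i) (s i) (C P) ≤ N * P.rootMultiplicity (t i) := by
    intro i
    have := wt_le (p := N) (q := 3) (t := t i) (s := s i) (f := C P)
      (j := P.rootMultiplicity (t i)) (k := 0) (by
        unfold gc; rw [taylor_C, coeff_C_zero]; exact rootMult_coeff _ hP _)
    simpa using this
  have h3 : P.natDegree ≤ tdeg (C P) := by
    have := le_tdeg (f := C P) (j := P.natDegree) (k := 0) (by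
      rw [coeff_C_zero]; exact leadingCoeff_ne_zero.2 hP)
    simpa using this
  calc _ ≤ ∑ i, N * P.rootMultiplicity (t i) := Finset.sum_le_sum fun i _ => h2 i
    _ = N * ∑ i, P.rootMultiplicity (t i) := by rw [Finset.mul_sum]
    _ ≤ N * P.natDegree := Nat.mul_le_mul_left _ (sum_order_le t ht P hP)
    _ ≤ N * (tdeg (C P) + (C P).natDegree) := Nat.mul_le_mul_left _ (by omega)

lemma pot_one {ι : Type*} [Fintype ι] (s t : ι → ℂ) (hs : Function.Injective s)
    (hN2 : 2 ≤ Fintype.card ι)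
    (hmu : ∀ u v : ℂ, 3 * Nat.card {i // v = s i * u + t i} < 2 * Fintype.card ι)
    (g : ℂ[X][X]) (hg : Irreducible g) (hb : g.natDegree = 1) :
    ∑ i, wt (Fintype.card ι) 3 (t i) (s i) g ≤ Fintype.card ι * (tdeg g + g.natDegree) := by
  classical
  set N := Fintype.card ι with hN
  have hprim : g.IsPrimitive := hg.isPrimitive (by omega)
  have hlead : ∀ i, (taylor (C (s i)) g).coeff 1 = g.coeff 1 := by
    intro i
    rw [← hb, coeff_taylor_natDegree, leadingCoeff]
  have hW : ∀ i, wt N 3 (t i) (s i) g ≤ if eval (t i) (eval (C (s i)) g) = 0 then 3 else 0 := by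
    intro i
    split_ifs with h0
    · by_cases h1 : eval (t i) (g.coeff 1) = 0
      · exfalso
        have hd : C (X - C (t i)) ∣ taylor (C (s i)) g := by
          rw [C_dvd_iff_dvd_coeff]
          intro k
          rw [dvd_iff_isRoot, IsRoot.def]
          match k with
          | 0 => rw [taylor_coeff_zero]; exact h0
          | 1 => rw [hlead]; exact h1
          | k + 2 => rw [coeff_eq_zero_of_natDegree_lt (by rw [natDegree_taylor]; omega)]; simp
        have hd2 : C (X - C (t i)) ∣ g := by
          obtain ⟨h, hh⟩ := hd
          refine ⟨taylor (-C (s i)) h, ?_⟩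
          have := congrArg (taylor (-C (s i))) hh
          rw [taylor_taylor, taylor_mul, taylor_C] at this
          simpa using this
        have := hprim _ hd2
        exact (irreducible_X_sub_C (t i)).not_isUnit this
      · have := wt_le (p := N) (q := 3) (t := t i) (s := s i) (f := g) (j := 0) (k := 1) (by
          unfold gc; rw [hlead, taylor_coeff_zero]; exact h1)
        simpa using this
    · have := wt_le (p := N) (q := 3) (t := t i) (s := s i) (f := g) (j := 0) (k := 0) (by
          unfold gc; rw [taylor_coeff_zero, taylor_coeff_zero]; exact h0)
      simpa using this
  have hsum : ∑ i, wt N 3 (t i) (s i) g ≤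
      3 * (Finset.univ.filter fun i => eval (t i) (eval (C (s i)) g) = 0).card := by
    refine (Finset.sum_le_sum fun i _ => hW i).trans ?_
    rw [← Finset.sum_filter, Finset.sum_const, smul_eq_mul, mul_comm]
  have hle := Finset.card_le_univ (Finset.univ.filter fun i => eval (t i) (eval (C (s i)) g) = 0)
  have hc1 : g.coeff 1 ≠ 0 := by
    rw [← hb]; apply leadingCoeff_ne_zero.2 hg.ne_zero
  by_cases hD : 2 ≤ tdeg g
  · calc _ ≤ _ := hsum
      _ ≤ 3 * N := by omega
      _ = N * 3 := by ring
      _ ≤ N * (tdeg g + g.natDegree) := Nat.mul_le_mul_left _ (by omega)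
  · have hD1 : tdeg g ≤ 1 := by omega
    have hc : g.coeff 1 = C ((g.coeff 1).coeff 0) := by
      ext j
      rcases j with _ | j
      · simp
      · by_contra h
        rw [coeff_C_succ] at h
        have := le_tdeg h
        omega
    have hc0 : (g.coeff 1).coeff 0 ≠ 0 := by
      intro h; rw [h] at hc; simp at hc; exact hc1 hc
    have ha : g.coeff 0 = C ((g.coeff 0).coeff 0) + C ((g.coeff 0).coeff 1) * X := by
      ext j
      rcases j with _ | _ | j
      · simp
      · simp
      · by_contra h
        have h' : (g.coeff 0).coeff (j + 2) ≠ 0 := by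
          intro h2; apply h; rw [h2]; simp [coeff_X]
        have := le_tdeg h'
        omega
    have hev : ∀ i, eval (t i) (eval (C (s i)) g) =
        (g.coeff 0).coeff 0 + (g.coeff 0).coeff 1 * t i + (g.coeff 1).coeff 0 * s i := by
      intro i
      have e1 : eval (C (s i)) g = g.coeff 0 + g.coeff 1 * C (s i) := by
        rw [eval_eq_sum_range, hb, Finset.sum_range_succ, Finset.sum_range_one]; simp
      rw [e1, eval_add, eval_mul, hc, ha]
      simp
    have hD1' : 1 ≤ tdeg g := by
      have := le_tdeg hc0; omega
    simp only [hev] at hsum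
    set c := (g.coeff 1).coeff 0
    set α := (g.coeff 0).coeff 1
    set γ := (g.coeff 0).coeff 0
    have hcard : 3 * (Finset.univ.filter fun i => γ + α * t i + c * s i = 0).card ≤ 2 * N := by
      by_cases hα : α = 0
      · have : (Finset.univ.filter fun i => γ + α * t i + c * s i = 0).card ≤ 1 := by
          rw [Finset.card_le_one]
          intro i hi j hj
          simp only [Finset.mem_filter, hα, zero_mul, add_zero] at hi hj
          apply hs
          have : c * s i = c * s j := by linear_combination hi.2 - hj.2
          exact mul_left_cancel₀ hc0 this
        omega
      · have h := hmu (c / α) (-γ / α)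
        rw [Nat.card_eq_fintype_card, Fintype.card_subtype] at h
        have : (Finset.univ.filter fun i => γ + α * t i + c * s i = 0) =
            Finset.univ.filter fun i => -γ / α = s i * (c / α) + t i := by
          ext i
          simp only [Finset.mem_filter, Finset.mem_univ, true_and]
          constructor
          · intro h; field_simp; linear_combination -h
          · intro h; field_simp at h; linear_combination -h
        rw [this]; omega
    calc _ ≤ _ := hsum
      _ ≤ 2 * N := hcard
      _ = N * 2 := by ring
      _ ≤ N * (tdeg g + g.natDegree) := Nat.mul_le_mul_left _ (by omega)

theorem potential {ι : Type*} [Fintype ι] (s t : ι → ℂ) (hs : Function.Injective s)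
    (ht : Function.Injective t) (hN2 : 2 ≤ Fintype.card ι)
    (hmu : ∀ u v : ℂ, 3 * Nat.card {i // v = s i * u + t i} < 2 * Fintype.card ι)
    (f : ℂ[X][X]) (hf : f ≠ 0) :
    ∑ i, wt (Fintype.card ι) 3 (t i) (s i) f ≤ Fintype.card ι * (tdeg f + f.natDegree) := by
  induction f using WfDvdMonoid.induction_on_irreducible with
  | zero => exact absurd rfl hf
  | unit u hu => exact pot_zero s t ht u hf (natDegree_eq_zero_of_isUnit hu)
  | mul a i ha hi ih =>
    simp only [wt_mul _ _ _ _ hi.ne_zero ha, tdeg_mul hi.ne_zero ha,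
      natDegree_mul hi.ne_zero ha, Finset.sum_add_distrib]
    have h1 := ih ha
    have h2 : ∑ j, wt (Fintype.card ι) 3 (t j) (s j) i ≤
        Fintype.card ι * (tdeg i + i.natDegree) := by
      rcases Nat.lt_or_ge i.natDegree 2 with h | h
      · interval_cases h3 : i.natDegree
        · have := pot_zero s t ht i hi.ne_zero h3; rwa [h3] at this
        · have := pot_one s t hs hN2 hmu i hi h3; rwa [h3] at this
      · exact pot_big s t ht i hi h
    linarith

end LineArr

namespace LineArr

lemma mem_dLT {P : ℂ[X]} {a : ℕ} : P ∈ degreeLT ℂ a ↔ ∀ e, a ≤ e → P.coeff e = 0 := by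
  rw [mem_degreeLT, degree_lt_iff_coeff_zero]

lemma coeff_mem_of_eval (p : ℂ[X][X]) (a : ℕ) (h : ∀ y : ℂ, eval (C y) p ∈ degreeLT ℂ a) (l : ℕ) :
    p.coeff l ∈ degreeLT ℂ a := by
  rw [mem_dLT]
  intro e he
  set q : ℂ[X] := ∑ l ∈ Finset.range (p.natDegree + 1), monomial l ((p.coeff l).coeff e) with hq
  have hq0 : q = 0 := by
    apply Polynomial.funext
    intro y
    have := mem_dLT.1 (h y) e he
    rw [eval_eq_sum_range, finset_sum_coeff] at this
    rw [hq, eval_finsetSum, eval_zero, ← this]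
    apply Finset.sum_congr rfl
    intro l _
    rw [eval_monomial, ← C_pow, coeff_mul_C]
  by_cases hl : l < p.natDegree + 1
  · have h2 : q.coeff l = (p.coeff l).coeff e := by
      rw [hq, finset_sum_coeff]
      simp only [coeff_monomial]
      rw [Finset.sum_ite_eq' (Finset.range (p.natDegree + 1)) l]
      simp [hl]
    rw [← h2, hq0, coeff_zero]
  · have : p.coeff l = 0 := coeff_eq_zero_of_natDegree_lt (by omega)
    rw [this, coeff_zero]

lemma mul_X_pow_mem {P : ℂ[X]} {a b l : ℕ} (hP : P ∈ degreeLT ℂ a) (h : a + l ≤ b) (c : ℂ) :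
    P * (C c * X ^ l) ∈ degreeLT ℂ b := by
  rw [mem_dLT] at *
  intro e he
  rw [← mul_assoc, coeff_mul_X_pow', coeff_mul_C]
  split_ifs with h1
  · rw [hP _ (by omega), zero_mul]
  · rfl

lemma eval_negX_mem (p : ℂ[X][X]) (a k : ℕ) (h : ∀ l, p.coeff l ∈ degreeLT ℂ a)
    (hk : p.natDegree ≤ k) : eval (-X) p ∈ degreeLT ℂ (a + k) := by
  rw [eval_eq_sum_range]
  apply Submodule.sum_mem
  intro l hl
  have hl' := Finset.mem_range.1 hl
  have : (-X : ℂ[X]) ^ l = C ((-1) ^ l) * X ^ l := by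
    rw [neg_pow]; simp
  rw [this]
  exact mul_X_pow_mem (h l) (by omega) _

/-- the Taylor coefficients of `F(u,v,s)` along the line `v = s u + t` -/
noncomputable def gg (s t : ℂ) (F : ℂ[X][X][X]) (j k : ℕ) : ℂ[X] :=
  (taylor (C s * X + C t) ((taylor (C (C s)) F).coeff k)).coeff j

noncomputable def shft3 (s t : ℂ) : ℂ[X][X][X] →+* ℂ[X][X][X] :=
  (mapRingHom ((taylorAlgHom (C s * X + C t) : ℂ[X][X] →ₐ[ℂ[X]] ℂ[X][X]) : ℂ[X][X] →+* ℂ[X][X])).comp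
    ((taylorAlgHom (C (C s)) : ℂ[X][X][X] →ₐ[ℂ[X][X]] ℂ[X][X][X]) : ℂ[X][X][X] →+* ℂ[X][X][X])

lemma shft3_coeff (s t : ℂ) (F : ℂ[X][X][X]) (j k : ℕ) :
    ((shft3 s t F).coeff k).coeff j = gg s t F j k := by
  change ((Polynomial.map ((taylorAlgHom (C s * X + C t) : ℂ[X][X] →ₐ[ℂ[X]] ℂ[X][X]) : ℂ[X][X] →+* ℂ[X][X])
    (taylor (C (C s)) F)).coeff k).coeff j = _
  rw [coeff_map]; rfl

lemma shft3_inj (s t : ℂ) : Function.Injective (shft3 s t) := by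
  have h1 : Function.Injective
    ((taylorAlgHom (C s * X + C t) : ℂ[X][X] →ₐ[ℂ[X]] ℂ[X][X]) : ℂ[X][X] →+* ℂ[X][X]) :=
    taylor_injective _
  have h2 : Function.Injective
      ((taylorAlgHom (C (C s)) : ℂ[X][X][X] →ₐ[ℂ[X][X]] ℂ[X][X][X]) : ℂ[X][X][X] →+* ℂ[X][X][X]) :=
    taylor_injective _
  intro a b h
  exact h2 (Polynomial.map_injective _ h1 h)

/-- restriction to the graph of the line with slope `s` and intercept `t` -/
noncomputable def sb (s t : ℂ) : ℂ[X][X][X] →+* ℂ[X] :=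
  (evalRingHom (C t + C s * X)).comp (evalRingHom (C (C s)))

/-- blow up -/
noncomputable def bl (y : ℂ) : ℂ[X][X][X] →+* ℂ[X][X] :=
  eval₂RingHom (S := ℂ[X][X]) (eval₂RingHom (S := ℂ[X][X]) (C : ℂ[X] →+* ℂ[X][X])
    (C (X + C y) * X)) X

lemma bl_coeff (y : ℂ) (G : ℂ[X][X][X]) (d : ℕ) :
    (bl y G).coeff d = ∑ x ∈ Finset.HasAntidiagonal.antidiagonal d, (G.coeff x.2).coeff x.1 * (X + C y) ^ x.1 := by
  induction G using Polynomial.induction_on' with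
  | add a b ha hb =>
    rw [map_add]; simp only [coeff_add, ha, hb, add_mul, Finset.sum_add_distrib]
  | monomial k0 P =>
    induction P using Polynomial.induction_on' with
    | add a b ha hb =>
      rw [map_add, map_add]; simp only [coeff_add, ha, hb, add_mul, Finset.sum_add_distrib]
    | monomial j0 a =>
      have : bl y (monomial k0 (monomial j0 a)) = C (a * (X + C y) ^ j0) * X ^ (j0 + k0) := by
        simp only [bl, coe_eval₂RingHom, eval₂_monomial, mul_pow]
        simp only [map_mul, map_pow]
        ring
      rw [this, coeff_C_mul, coeff_X_pow]
      simp only [coeff_monomial]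
      by_cases h : d = j0 + k0
      · subst h
        rw [Finset.sum_eq_single (j0, k0)]
        · simp
        · rintro ⟨j, k⟩ hjk hne
          rw [Finset.HasAntidiagonal.mem_antidiagonal] at hjk
          simp only at hjk ⊢
          split_ifs with h1
          · rw [coeff_monomial, if_neg, zero_mul]
            rintro rfl; apply hne; ext <;> simp; omega
          · simp
        · intro h; simp at h
      · rw [if_neg h, mul_zero]
        symm
        apply Finset.sum_eq_zero
        rintro ⟨j, k⟩ hjk
        rw [Finset.HasAntidiagonal.mem_antidiagonal] at hjk
        simp only at hjk ⊢
        split_ifs with h1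
        · rw [coeff_monomial, if_neg, zero_mul]
          rintro rfl; omega
        · simp

lemma bl_shft3 (s t σ y : ℂ) (F : ℂ[X][X][X]) :
    eval (C σ) (bl y (shft3 s t F)) = sb (s + σ) (t + σ * y) F := by
  have : ((evalRingHom (C σ)).comp ((bl y).comp (shft3 s t))) = sb (s + σ) (t + σ * y) := by
    apply ringHom_ext'
    · apply ringHom_ext'
      · apply ringHom_ext'
        · ext x; simp [bl, shft3, sb]
        · simp [bl, shft3, sb]
      · simp [bl, shft3, sb]; ring
    · simp [bl, shft3, sb]; ring
  exact congrArg (fun φ => φ F) this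

/-- the key degree estimate -/
lemma key_deg (a : ℕ) (F : ℂ[X][X][X]) (hF : ∀ s t, sb s t F ∈ degreeLT ℂ a) (s t : ℂ) (j k : ℕ)
    (h0 : ∀ j' k', j' + k' = j + k → j' < j → gg s t F j' k' = 0) :
    gg s t F j k ∈ degreeLT ℂ (a - j + k) ∧ (a ≤ j → gg s t F j k = 0) := by
  have h1 : ∀ y : ℂ, (bl y (shft3 s t F)).coeff (j + k) ∈ degreeLT ℂ a := by
    intro y
    apply coeff_mem_of_eval
    intro σ
    rw [bl_shft3]
    exact hF _ _
  set Q : ℂ[X][X] := ∑ l ∈ Finset.range (k + 1), C (gg s t F (j + l) (k - l)) * (C X + X) ^ l with hQ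
  have h2 : ∀ y : ℂ, (bl y (shft3 s t F)).coeff (j + k) = (X + C y) ^ j * eval (C y) Q := by
    intro y
    rw [bl_coeff, Finset.Nat.sum_antidiagonal_eq_sum_range_succ_mk, hQ, eval_finsetSum,
      Finset.mul_sum, show (j + k).succ = j + (k + 1) by omega, Finset.sum_range_add]
    rw [Finset.sum_eq_zero, zero_add]
    · apply Finset.sum_congr rfl
      intro l hl
      simp only [shft3_coeff]
      rw [show j + k - (j + l) = k - l by omega, pow_add]
      simp; ring
    · intro l hl
      simp only [shft3_coeff]
      have := Finset.mem_range.1 hl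
      rw [h0 _ _ (by omega) this, zero_mul]
  have h3 : ∀ y : ℂ, eval (C y) Q ∈ degreeLT ℂ (a - j) := by
    intro y
    by_cases h : eval (C y) Q = 0
    · rw [h]; exact zero_mem _
    have := h1 y
    rw [h2, mem_degreeLT, degree_mul, degree_pow, degree_X_add_C, degree_eq_natDegree h] at this
    rw [mem_degreeLT, degree_eq_natDegree h]
    have h5 : j + (eval (C y) Q).natDegree < a := by
      have h6 : ((j + (eval (C y) Q).natDegree : ℕ) : WithBot ℕ) < (a : WithBot ℕ) := by
        simpa using this
      exact_mod_cast h6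
    have : (eval (C y) Q).natDegree < a - j := by omega
    exact_mod_cast this
  have h4 := coeff_mem_of_eval Q _ h3
  have hdeg : Q.natDegree ≤ k := by
    apply natDegree_sum_le_of_forall_le
    intro l hl
    have := Finset.mem_range.1 hl
    refine (natDegree_C_mul_le _ _).trans ?_
    refine (natDegree_pow_le).trans ?_
    rw [add_comm, natDegree_X_add_C]
    omega
  have h5 : gg s t F j k = eval (-X) Q := by
    rw [hQ, eval_finsetSum, Finset.sum_range_succ']
    rw [Finset.sum_eq_zero]
    · simp
    · intro l _
      simp
  rw [h5]
  refine ⟨eval_negX_mem Q _ _ h4 hdeg, fun haj => ?_⟩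
  have : Q = 0 := by
    ext l : 1
    have := h4 l
    rw [Nat.sub_eq_zero_of_le haj, mem_degreeLT] at this
    simpa using this
  rw [this, eval_zero]

lemma gg_zero_zero (F : ℂ[X][X][X]) (j k : ℕ) : gg 0 0 F j k = (F.coeff k).coeff j := by
  simp [gg]

/-- vanishing of high-degree coefficients -/
lemma coeff_vanish (a n : ℕ) (F : ℂ[X][X][X]) (hF : ∀ s t, sb s t F ∈ degreeLT ℂ a)
    (hn : F.natDegree ≤ n) (j k : ℕ) (h : a + n ≤ j + k) : (F.coeff k).coeff j = 0 := by
  induction j using Nat.strong_induction_on generalizing k with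
  | _ j ih =>
    by_cases hk : n < k
    · rw [coeff_eq_zero_of_natDegree_lt (hn.trans_lt hk), coeff_zero]
    · rw [← gg_zero_zero]
      refine (key_deg a F hF 0 0 j k ?_).2 (by omega)
      intro j' k' h1 h2
      rw [gg_zero_zero]
      exact ih j' h2 k' (by omega)

lemma eq_zero_of_sb (F : ℂ[X][X][X]) (hF : ∀ s t, sb s t F ∈ degreeLT ℂ 0) : F = 0 := by
  ext k j : 2
  rw [coeff_zero, coeff_zero]
  induction j using Nat.strong_induction_on generalizing k with
  | _ j ih =>
    rw [← gg_zero_zero]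
    refine (key_deg 0 F hF 0 0 j k ?_).2 (by omega)
    intro j' k' h1 h2
    rw [gg_zero_zero]
    exact ih j' h2 k'

end LineArr

namespace LineArr

/-- rank-nullity in the form used below -/
lemma rn {E E' : Type*} [AddCommGroup E] [Module ℂ E] [AddCommGroup E'] [Module ℂ E']
    (V V' : Submodule ℂ E) (φ : E →ₗ[ℂ] E') (T : Submodule ℂ E') [Module.Finite ℂ T]
    [Module.Finite ℂ V'] (h : ∀ x ∈ V, φ x ∈ T) (h' : ∀ x ∈ V, φ x = 0 → x ∈ V') :
    Module.Finite ℂ V ∧ Module.finrank ℂ V ≤ Module.finrank ℂ V' + Module.finrank ℂ T := by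
  let ψ : V →ₗ[ℂ] T := (φ.domRestrict V).codRestrict T (fun x => h x x.2)
  let j : LinearMap.ker ψ →ₗ[ℂ] V' := ((V.subtype).domRestrict (LinearMap.ker ψ)).codRestrict V' (by
    intro x
    apply h' _ x.1.2
    have := x.2
    rw [LinearMap.mem_ker] at this
    exact congrArg Subtype.val this)
  have hj : Function.Injective j := by
    intro x y hxy
    apply Subtype.ext; apply Subtype.ext
    exact congrArg (fun z : V' => (z : E)) hxy
  have f1 : Module.Finite ℂ (LinearMap.ker ψ) := Module.Finite.of_injective j hj
  have f2 : Module.Finite ℂ (LinearMap.range ψ) := inferInstance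
  have fV : Module.Finite ℂ V := by
    have e := ψ.quotKerEquivRange
    have : Module.Finite ℂ (V ⧸ LinearMap.ker ψ) := Module.Finite.equiv e.symm
    exact Module.Finite.of_submodule_quotient (LinearMap.ker ψ)
  refine ⟨fV, ?_⟩
  have := LinearMap.finrank_range_add_finrank_ker ψ
  have h1 := LinearMap.finrank_le_finrank_of_injective hj
  have h2 := Submodule.finrank_le (LinearMap.range ψ)
  omega

/-- successive linear conditions -/
lemma conds {E E' κ : Type*} [AddCommGroup E] [Module ℂ E] [AddCommGroup E'] [Module ℂ E']
    (V : Submodule ℂ E) [Module.Finite ℂ V] (r : κ → ℕ) (φ : κ → E →ₗ[ℂ] E')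
    (T : κ → Submodule ℂ E') [∀ c, Module.Finite ℂ (T c)] (S : Finset κ)
    (h : ∀ x ∈ V, ∀ c ∈ S, (∀ c' ∈ S, r c' < r c → φ c' x = 0) → φ c x ∈ T c)
    (V' : Submodule ℂ E) [Module.Finite ℂ V']
    (hV' : ∀ x ∈ V, (∀ c ∈ S, φ c x = 0) → x ∈ V') :
    Module.finrank ℂ V ≤ Module.finrank ℂ V' + ∑ c ∈ S, Module.finrank ℂ (T c) := by
  classical
  induction S using Finset.induction_on_max_value r generalizing V' with
  | empty =>
    have : V ≤ V' := fun x hx => hV' x hx (by simp)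
    simpa using Submodule.finrank_mono this
  | insert a S ha hmax ih =>
    let U : Submodule ℂ E := V ⊓ ⨅ c ∈ S, LinearMap.ker (φ c)
    have hU : ∀ x, x ∈ U ↔ x ∈ V ∧ ∀ c ∈ S, φ c x = 0 := by
      intro x; simp [U]
    have : Module.Finite ℂ U := Module.Finite.of_injective (Submodule.inclusion (inf_le_left : U ≤ V))
      (Submodule.inclusion_injective _)
    have h1 := ih (fun x hx c hc hlt => h x hx c (Finset.mem_insert_of_mem hc) (by
      intro c' hc' hr
      rcases Finset.mem_insert.1 hc' with rfl | hc'
      · have := hmax c hc; omega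
      · exact hlt c' hc' hr)) U (fun x hx hc => (hU x).2 ⟨hx, hc⟩)
    have h2 := (rn U V' (φ a) (T a) (by
      intro x hx
      obtain ⟨hxV, hx0⟩ := (hU x).1 hx
      apply h x hxV a (Finset.mem_insert_self _ _)
      intro c' hc' hr
      rcases Finset.mem_insert.1 hc' with rfl | hc'
      · omega
      · exact hx0 c' hc') (by
      intro x hx hx0
      obtain ⟨hxV, hx1⟩ := (hU x).1 hx
      apply hV' x hxV
      intro c hc
      rcases Finset.mem_insert.1 hc with rfl | hc
      · exact hx0
      · exact hx1 c hc)).2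
    rw [Finset.sum_insert ha]
    omega

/-- the space `ℂ[u][v][s]`, with its structure of complex vector space -/
def E3 : Type := ℂ[X][X][X]

noncomputable instance : AddCommGroup E3 := inferInstanceAs (AddCommGroup ℂ[X][X][X])

noncomputable instance : Module ℂ E3 := inferInstanceAs (Module ℂ ℂ[X][X][X])

noncomputable def toP : E3 ≃+ ℂ[X][X][X] := AddEquiv.refl _

lemma toP_smul (c : ℂ) (F : E3) : toP (c • F) = C (C (C c)) * toP F := by
  have h : ∀ G : ℂ[X][X][X], c • G = C (C (C c)) * G := by
    intro G
    rw [← smul_eq_C_mul]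
    ext; simp
  exact h F

lemma ofP_smul (c : ℂ) (F : ℂ[X][X][X]) : toP.symm (C (C (C c)) * F) = c • toP.symm F := by
  rw [AddEquiv.symm_apply_eq, toP_smul, AddEquiv.apply_symm_apply]

noncomputable def ggL (s t : ℂ) (j k : ℕ) : E3 →ₗ[ℂ] ℂ[X] where
  toFun F := gg s t (toP F) j k
  map_add' a b := by simp [gg]
  map_smul' c a := by
    rw [toP_smul]
    simp [gg, taylor_mul, smul_eq_C_mul]

lemma sb_smul (s t c : ℂ) (F : E3) : sb s t (toP (c • F)) = c • sb s t (toP F) := by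
  rw [toP_smul, map_mul]
  simp [sb, smul_eq_C_mul]

def IsW (n a : ℕ) (F : ℂ[X][X][X]) : Prop := F.natDegree ≤ n ∧ ∀ s t, sb s t F ∈ degreeLT ℂ a

noncomputable def WW (n a : ℕ) : Submodule ℂ E3 where
  carrier := {F | IsW n a (toP F)}
  zero_mem' := by
    refine ⟨by simp, fun s t => ?_⟩
    rw [map_zero, map_zero]; exact zero_mem _
  add_mem' := by
    rintro F G ⟨h1, h2⟩ ⟨h3, h4⟩
    refine ⟨?_, fun s t => ?_⟩
    · rw [map_add]; exact natDegree_add_le_of_degree_le h1 h3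
    · rw [map_add, map_add]; exact add_mem (h2 s t) (h4 s t)
  smul_mem' := by
    rintro c F ⟨h1, h2⟩
    refine ⟨?_, fun s t => ?_⟩
    · rw [toP_smul]; exact (natDegree_C_mul_le _ _).trans h1
    · rw [sb_smul]; exact Submodule.smul_mem _ _ (h2 s t)

lemma mem_WW {n a : ℕ} {F : E3} : F ∈ WW n a ↔ IsW n a (toP F) := Iff.rfl

/-- restriction to `u = 0` -/
noncomputable def res : ℂ[X][X][X] →+* ℂ[X][X] := mapRingHom (mapRingHom (evalRingHom 0))

lemma res_coeff (F : ℂ[X][X][X]) (j k : ℕ) :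
    ((res F).coeff k).coeff j = ((F.coeff k).coeff j).coeff 0 := by
  simp [res, coeff_zero_eq_eval_zero]

lemma res_smul (c : ℂ) (F : E3) : res (toP (c • F)) = C (C c) * res (toP F) := by
  rw [toP_smul, map_mul]
  simp [res]

lemma exists_div (F : ℂ[X][X][X]) (h : res F = 0) : ∃ G, F = C (C X) * G := by
  have : C (C X) ∣ F := by
    rw [C_dvd_iff_dvd_coeff]
    intro k
    rw [C_dvd_iff_dvd_coeff]
    intro j
    rw [X_dvd_iff, ← res_coeff, h]; simp
  exact this

lemma sb_mulX (s t : ℂ) (G : ℂ[X][X][X]) : sb s t (C (C X) * G) = X * sb s t G := by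
  rw [map_mul]; simp [sb]

lemma X_mul_mem {P : ℂ[X]} {a : ℕ} : X * P ∈ degreeLT ℂ (a + 1) ↔ P ∈ degreeLT ℂ a := by
  rw [mem_dLT, mem_dLT]
  constructor
  · intro h e he
    have := h (e + 1) (by omega)
    rwa [coeff_X_mul] at this
  · intro h e he
    obtain ⟨e, rfl⟩ : ∃ e', e = e' + 1 := ⟨e - 1, by omega⟩
    rw [coeff_X_mul]; exact h e (by omega)

lemma mulX_IsW {n a : ℕ} {G : ℂ[X][X][X]} : IsW n (a + 1) (C (C X) * G) ↔ IsW n a G := by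
  have hd : (C (C X) * G).natDegree = G.natDegree := natDegree_C_mul (by simp)
  constructor
  · rintro ⟨h1, h2⟩
    refine ⟨by rwa [hd] at h1, fun s t => ?_⟩
    have := h2 s t
    rwa [sb_mulX, X_mul_mem] at this
  · rintro ⟨h1, h2⟩
    refine ⟨by rwa [hd], fun s t => ?_⟩
    rw [sb_mulX, X_mul_mem]; exact h2 s t

lemma gg_mulX (s t : ℂ) (G : ℂ[X][X][X]) (j k : ℕ) :
    gg s t (C (C X) * G) j k = X * gg s t G j k := by
  simp [gg, taylor_mul]

noncomputable def mX : E3 →ₗ[ℂ] E3 where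
  toFun F := toP.symm (C (C X) * toP F)
  map_add' a b := by rw [map_add, mul_add, map_add]
  map_smul' c a := by rw [toP_smul, mul_left_comm (C (C X)) (C (C (C c))) (toP a), ofP_smul]; rfl

lemma toP_mX (F : E3) : toP (mX F) = C (C X) * toP F := by simp [mX]

lemma WW_zero (n : ℕ) : WW n 0 = ⊥ := by
  rw [eq_bot_iff]
  rintro F ⟨_, h⟩
  have := eq_zero_of_sb _ h
  simpa using this

noncomputable def resJ (n b : ℕ) : E3 →ₗ[ℂ] (Fin (n + 1) × Fin b → ℂ) where
  toFun F := fun x => ((res (toP F)).coeff x.1).coeff x.2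
  map_add' a b := by ext; simp
  map_smul' c a := by ext; simp [res_smul]

lemma res_mem {n a : ℕ} {F : ℂ[X][X][X]} (hF : IsW n a F) {j k : ℕ}
    (h : ((res F).coeff k).coeff j ≠ 0) : k ≤ n ∧ j + k < a + n := by
  constructor
  · by_contra hk
    apply h
    rw [res_coeff, coeff_eq_zero_of_natDegree_lt (p := F) (hF.1.trans_lt (by omega))]; simp
  · by_contra hk
    apply h
    rw [res_coeff, coeff_vanish a n F hF.2 hF.1 j k (by omega)]; simp

/-- divisibility by `u` inside `E3` -/
lemma exists_div' (F : E3) (h : res (toP F) = 0) : ∃ G, mX G = F := by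
  obtain ⟨G, hG⟩ := exists_div _ h
  refine ⟨toP.symm G, ?_⟩
  apply toP.injective
  rw [toP_mX, hG, AddEquiv.apply_symm_apply]

lemma WW_finite (n a : ℕ) : Module.Finite ℂ (WW n a) := by
  induction a with
  | zero => rw [WW_zero]; infer_instance
  | succ a ih =>
    refine (rn (WW n (a + 1)) ((WW n a).map mX) (resJ n (a + 1 + n)) ⊤ (by simp) ?_).1
    intro F hF h0
    have : res (toP F) = 0 := by
      ext k j
      rw [coeff_zero, coeff_zero]
      by_contra h
      obtain ⟨h1, h2⟩ := res_mem hF h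
      apply h
      exact congrFun h0 (⟨k, by omega⟩, ⟨j, by omega⟩)
    obtain ⟨G, rfl⟩ := exists_div' F this
    rw [mem_WW, toP_mX] at hF
    exact ⟨G, mulX_IsW.1 hF, rfl⟩

noncomputable def lift (a j k : ℕ) : ℂ[X][X][X] :=
  C X ^ (min j a) * (C X - C (C X) * X) ^ (j - a) * X ^ k

lemma lift_res (a j k : ℕ) : res (lift a j k) = C (X ^ j) * X ^ k := by
  simp only [lift, res, map_mul, map_pow, map_sub, coe_mapRingHom, map_X, map_C, coe_evalRingHom,
    eval_X, map_zero, zero_mul, sub_zero, Polynomial.map_sub, Polynomial.map_mul]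
  rw [← pow_add]
  congr 2; omega

lemma lift_mem (n a j k : ℕ) (hk : k ≤ n) (hjk : j + k ≤ a + n) : IsW n (a + 1) (lift a j k) := by
  constructor
  · unfold lift
    refine natDegree_mul_le.trans ?_
    rw [natDegree_X_pow]
    have h1 : ((C X : ℂ[X][X][X]) ^ (min j a) * (C X - C (C X) * X) ^ (j - a)).natDegree ≤ j - a := by
      refine natDegree_mul_le.trans ?_
      rw [← C_pow, natDegree_C, zero_add]
      refine natDegree_pow_le.trans ?_
      have : (C X - C (C X) * X : ℂ[X][X][X]).natDegree ≤ 1 := by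
        compute_degree
      nlinarith
    omega
  · intro s t
    have : sb s t (lift a j k) = (C t + C s * X) ^ (min j a) * C (t ^ (j - a) * s ^ k) := by
      simp [lift, sb]; ring
    rw [this, mem_dLT, mul_comm]
    have h1 : ((C t + C s * X : ℂ[X]) ^ (min j a)).natDegree ≤ a := by
      refine natDegree_pow_le.trans ?_
      have : (C t + C s * X : ℂ[X]).natDegree ≤ 1 := by compute_degree
      have := Nat.min_le_right j a
      nlinarith
    have h2 := (natDegree_C_mul_le (t ^ (j - a) * s ^ k) ((C t + C s * X : ℂ[X]) ^ (min j a))).trans h1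
    intro e he
    exact coeff_eq_zero_of_natDegree_lt (by omega)

lemma WW_succ_ge (n a : ℕ) :
    Module.finrank ℂ (WW n a) + ∑ k ∈ Finset.range (n + 1), (a + n + 1 - k) ≤
      Module.finrank ℂ (WW n (a + 1)) := by
  have := WW_finite n a
  have := WW_finite n (a + 1)
  let I := Σ k : Fin (n + 1), Fin (a + n + 1 - k)
  let ψ : (I → ℂ) →ₗ[ℂ] E3 := Fintype.linearCombination ℂ (fun x : I => toP.symm (lift a x.2 x.1))
  have hψ : ∀ e, ψ e ∈ WW n (a + 1) := by
    intro e
    simp only [ψ, Fintype.linearCombination_apply]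
    apply Submodule.sum_mem
    intro x _
    apply Submodule.smul_mem
    have := x.1.2; have := x.2.2
    rw [mem_WW, AddEquiv.apply_symm_apply]
    apply lift_mem <;> omega
  have hres : ∀ e (x : I), ((res (toP (ψ e))).coeff x.1).coeff x.2 = e x := by
    intro e x
    simp only [ψ, Fintype.linearCombination_apply, map_sum]
    rw [finsetSum_coeff, finsetSum_coeff,
      Finset.sum_eq_single x]
    · rw [res_smul, AddEquiv.apply_symm_apply, lift_res, coeff_C_mul, coeff_C_mul_X_pow]; simp
    · rintro y _ hy
      rw [res_smul, AddEquiv.apply_symm_apply, lift_res, coeff_C_mul, coeff_C_mul_X_pow]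
      split_ifs with h
      · rw [coeff_C_mul, coeff_X_pow, if_neg, mul_zero]
        intro h2
        apply hy
        obtain ⟨k, j⟩ := x
        obtain ⟨k', j'⟩ := y
        have hk : k = k' := Fin.ext h
        subst hk
        have hj : j = j' := Fin.ext h2
        rw [hj]
      · simp
    · simp
  let θ : (WW n a × (I → ℂ)) →ₗ[ℂ] WW n (a + 1) :=
    (((mX.comp (WW n a).subtype).coprod ψ)).codRestrict (WW n (a + 1)) (by
      rintro ⟨y, e⟩
      rw [LinearMap.coprod_apply]
      exact add_mem (by
        change IsW _ _ _
        rw [LinearMap.comp_apply, toP_mX]; exact mulX_IsW.2 y.2) (hψ e))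
  have hθ : Function.Injective θ := by
    rw [← LinearMap.ker_eq_bot, LinearMap.ker_eq_bot']
    rintro ⟨y, e⟩ h
    have h1 : mX (y : E3) + ψ e = 0 := congrArg Subtype.val h
    have h2 : res (toP (ψ e)) = 0 := by
      have := congrArg (fun z => res (toP z)) h1
      simp only [map_add, toP_mX, map_mul] at this
      simpa [res] using this
    have he : e = 0 := by
      ext x
      have := hres e x
      rw [h2] at this; simpa using this.symm
    rw [he, map_zero, add_zero] at h1
    have : (y : E3) = 0 := by simpa [mX] using h1
    rw [he]; ext <;> simp [this]
  have := LinearMap.finrank_le_finrank_of_injective hθ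
  rw [Module.finrank_prod, Module.finrank_fintype_fun_eq_card] at this
  convert this using 2
  rw [Fintype.card_sigma, Finset.sum_range]
  simp

lemma WW_ge (n a : ℕ) :
    ∑ b ∈ Finset.range a, ∑ k ∈ Finset.range (n + 1), (b + n + 1 - k) ≤
      Module.finrank ℂ (WW n a) := by
  induction a with
  | zero => simp
  | succ a ih =>
    rw [Finset.sum_range_succ]
    have := WW_succ_ge n a
    omega

end LineArr

namespace LineArr

lemma gc_res (s t : ℂ) (F : ℂ[X][X][X]) (j k : ℕ) :
    gc t s (res F) j k = (gg s t F j k).coeff 0 := by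
  have h1 : taylor (C s) (res F) = res (taylor (C (C s)) F) := by
    unfold res
    rw [coe_mapRingHom, map_taylor]; simp
  have h2 : ∀ P : ℂ[X][X], taylor t (P.map (evalRingHom 0)) =
      (taylor (C s * X + C t) P).map (evalRingHom 0) := by
    intro P
    rw [map_taylor]; simp
  unfold gc gg
  rw [h1]
  have h3 : (res (taylor (C (C s)) F)).coeff k =
      ((taylor (C (C s)) F).coeff k).map (evalRingHom 0) := by
    unfold res
    rw [coe_mapRingHom, coeff_map]; rfl
  rw [h3, h2, coeff_map, coeff_zero_eq_eval_zero, coe_evalRingHom]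

noncomputable def SS {ι : Type*} [Fintype ι] (s t : ι → ℂ) (n a : ℕ) : Submodule ℂ E3 :=
  WW n a ⊓ ⨅ i, ⨅ j, ⨅ k, ⨅ _ : Fintype.card ι * j + 3 * k < 3 * n, LinearMap.ker (ggL (s i) (t i) j k)

lemma mem_SS {ι : Type*} [Fintype ι] {s t : ι → ℂ} {n a : ℕ} {F : E3} :
    F ∈ SS s t n a ↔ IsW n a (toP F) ∧
      ∀ i j k, Fintype.card ι * j + 3 * k < 3 * n → gg (s i) (t i) (toP F) j k = 0 := by
  simp only [SS, Submodule.mem_inf, Submodule.mem_iInf, LinearMap.mem_ker]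
  rfl

lemma pow_dvd_of_taylor (P : ℂ[X]) (u : ℂ) (e : ℕ) (h : ∀ i < e, (taylor u P).coeff i = 0) :
    (X - C u) ^ e ∣ P := by
  have h1 : X ^ e ∣ taylor u P := X_pow_dvd_iff.2 h
  obtain ⟨Q, hQ⟩ := h1
  refine ⟨taylor (-u) Q, ?_⟩
  have := congrArg (taylor (-u)) hQ
  rw [taylor_taylor, taylor_mul, taylor_pow, taylor_X] at this
  simpa [sub_eq_add_neg] using this

/-- the crucial vanishing statement -/
lemma res_vanish {ι : Type*} [Fintype ι] (s t : ι → ℂ) (hs : Function.Injective s)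
    (ht : Function.Injective t) (hN2 : 2 ≤ Fintype.card ι)
    (hmu : ∀ u v : ℂ, 3 * Nat.card {i // v = s i * u + t i} < 2 * Fintype.card ι)
    (n a : ℕ) (F : E3) (hF : F ∈ SS s t n (a + 1)) (v0 : ℂ) (hv0 : ∀ i, t i ≠ v0)
    (hJ : ∀ k ≤ n, ∀ l < a + 1 - n, (taylor v0 ((res (toP F)).coeff k)).coeff l = 0) :
    res (toP F) = 0 := by
  by_contra hne
  obtain ⟨hW, hgg⟩ := mem_SS.1 hF
  set f := res (toP F) with hf
  set N := Fintype.card ι with hN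
  set c := a + 1 - n with hc
  have hdvd : C ((X - C v0) ^ c) ∣ f := by
    rw [C_dvd_iff_dvd_coeff]
    intro k
    by_cases hk : k ≤ n
    · exact pow_dvd_of_taylor _ _ _ (hJ k hk)
    · have : f.coeff k = 0 := by
        ext j
        rw [coeff_zero]
        by_contra h
        exact hk (res_mem hW h).1
      rw [this]; exact dvd_zero _
  obtain ⟨h, hh⟩ := hdvd
  have hh0 : h ≠ 0 := by rintro rfl; rw [mul_zero] at hh; exact hne hh
  have hC0 : C ((X - C v0) ^ c) ≠ 0 := by
    rw [Ne, C_eq_zero]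
    exact pow_ne_zero _ (X_sub_C_ne_zero v0)
  have hd : f.natDegree ≤ n := by
    rw [natDegree_le_iff_coeff_eq_zero]
    intro k hk
    ext j
    rw [coeff_zero]
    by_contra h
    have := (res_mem hW h).1
    omega
  have htd : tdeg f ≤ a + n := by
    apply tdeg_le
    intro j k h
    have := (res_mem hW h).2
    omega
  have hwt : ∀ i, 3 * n ≤ wt N 3 (t i) (s i) f := by
    intro i
    apply le_wt hne
    intro j k hjk
    by_contra hlt
    apply hjk
    rw [hf, gc_res, hgg i j k (by omega), coeff_zero]
  have hwC : ∀ i, wt N 3 (t i) (s i) (C ((X - C v0) ^ c)) = 0 := by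
    intro i
    have := wt_le (p := N) (q := 3) (t := t i) (s := s i) (f := C ((X - C v0) ^ c)) (j := 0) (k := 0) (by
      unfold gc
      rw [taylor_C, coeff_C_zero, taylor_coeff_zero]
      simp only [eval_pow, eval_sub, eval_X, eval_C]
      exact pow_ne_zero _ (sub_ne_zero.2 (hv0 i)))
    simpa using this
  have htC : c ≤ tdeg (C ((X - C v0) ^ c)) := by
    have := le_tdeg (f := C ((X - C v0) ^ c)) (j := c) (k := 0) (by
      rw [coeff_C_zero]
      have h1 : ((X - C v0) ^ c).natDegree = c := by simp
      have h2 : ((X - C v0) ^ c).Monic := (monic_X_sub_C v0).pow c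
      have := h2.coeff_natDegree
      rw [h1] at this
      rw [this]; exact one_ne_zero)
    simpa using this
  have hpot := potential s t hs ht hN2 hmu h hh0
  have h1 : N * (3 * n) ≤ ∑ i, wt N 3 (t i) (s i) h := by
    have : ∀ i ∈ Finset.univ, 3 * n ≤ wt N 3 (t i) (s i) h := by
      intro i _
      have := hwt i
      rw [hh, wt_mul _ _ _ _ hC0 hh0, hwC] at this
      omega
    have := Finset.card_nsmul_le_sum _ _ _ this
    simpa using this
  have h2 : tdeg h + c ≤ a + n := by
    rw [hh, tdeg_mul hC0 hh0] at htd
    omega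
  have h3 : h.natDegree ≤ n := by
    rw [hh, natDegree_mul hC0 hh0] at hd
    omega
  have h4 : N * (3 * n) ≤ N * (tdeg h + h.natDegree) := h1.trans hpot
  have h5 := Nat.le_of_mul_le_mul_left h4 (by omega)
  omega

noncomputable def resT (v0 : ℂ) (n b : ℕ) : E3 →ₗ[ℂ] (Fin (n + 1) × Fin b → ℂ) where
  toFun F := fun x => (taylor v0 ((res (toP F)).coeff x.1)).coeff x.2
  map_add' a b := by ext; simp
  map_smul' c a := by
    ext; rw [res_smul, coeff_C_mul, taylor_mul, taylor_C]; simp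

lemma SS_le {ι : Type*} [Fintype ι] (s t : ι → ℂ) (hs : Function.Injective s)
    (ht : Function.Injective t) (hN2 : 2 ≤ Fintype.card ι)
    (hmu : ∀ u v : ℂ, 3 * Nat.card {i // v = s i * u + t i} < 2 * Fintype.card ι)
    (n a : ℕ) : Module.finrank ℂ (SS s t n a) ≤ ∑ b ∈ Finset.range a, (n + 1) * (b + 1 - n) := by
  obtain ⟨v0, hv0⟩ : ∃ v0, ∀ i, t i ≠ v0 := by
    obtain ⟨v0, h⟩ := (Set.finite_range t).exists_notMem
    exact ⟨v0, fun i hi => h ⟨i, hi⟩⟩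
  have hfin : ∀ a, Module.Finite ℂ (SS s t n a) := fun a => by
    have := WW_finite n a
    exact Module.Finite.of_injective (Submodule.inclusion (inf_le_left : SS s t n a ≤ WW n a))
      (Submodule.inclusion_injective _)
  induction a with
  | zero =>
    have : SS s t n 0 = ⊥ := by
      rw [eq_bot_iff]; exact inf_le_left.trans (WW_zero n).le
    rw [this]; simp
  | succ a ih =>
    have := hfin a
    have h := (rn (SS s t n (a + 1)) ((SS s t n a).map mX) (resT v0 n (a + 1 - n)) ⊤ (by simp) (by
      intro F hF h0
      have : res (toP F) = 0 := by
        apply res_vanish s t hs ht hN2 hmu n a F hF v0 hv0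
        intro k hk l hl
        exact congrFun h0 (⟨k, by omega⟩, ⟨l, hl⟩)
      obtain ⟨G, rfl⟩ := exists_div' F this
      refine ⟨G, ?_, rfl⟩
      rw [SetLike.mem_coe, mem_SS]
      rw [mem_SS, toP_mX] at hF
      refine ⟨mulX_IsW.1 hF.1, fun i j k hjk => ?_⟩
      have := hF.2 i j k hjk
      rw [gg_mulX] at this
      simpa using this)).2
    rw [finrank_top, Module.finrank_fintype_fun_eq_card, Fintype.card_prod, Fintype.card_fin,
      Fintype.card_fin] at h
    have h2 := Submodule.finrank_map_le mX (SS s t n a)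
    rw [Finset.sum_range_succ]
    omega

end LineArr

namespace LineArr

noncomputable def gcA (t s : ℂ) (j k : ℕ) : ℂ[X][X] →+ ℂ where
  toFun f := gc t s f j k
  map_zero' := by simp [gc]
  map_add' a b := by simp [gc]

lemma gcA_apply (t s : ℂ) (j k : ℕ) (f : ℂ[X][X]) : gcA t s j k f = gc t s f j k := rfl

lemma gc_C_C_mul (t s c : ℂ) (f : ℂ[X][X]) (j k : ℕ) :
    gc t s (C (C c) * f) j k = c * gc t s f j k := by
  simp [gc, taylor_mul]

lemma dvd_gg (F : ℂ[X][X][X]) (s t u v : ℂ) (K : ℕ) (hv : v = s * u + t)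
    (h : ∀ k i j, i + j < K → gc u v (F.coeff k) i j = 0) (j k : ℕ) :
    (X - C u) ^ (K - j) ∣ gg s t F j k := by
  unfold gg
  set G := (taylor (C (C s)) F).coeff k with hG
  have hG0 : ∀ i j, i + j < K → gc u v G i j = 0 := by
    intro i j hij
    rw [hG, taylor_coeff, eval_eq_sum_range, ← gcA_apply, map_sum]
    apply Finset.sum_eq_zero
    intro l _
    rw [hasseDeriv_coeff, gcA_apply]
    have : (((l + k).choose k : ℕ) : ℂ[X][X]) * F.coeff (l + k) * C (C s) ^ l =
        C (C (((l + k).choose k : ℕ) * s ^ l)) * F.coeff (l + k) := by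
      simp; ring
    rw [this, gc_C_C_mul, h _ _ _ hij, mul_zero]
  have hr : C s * X + C t = C s * (X - C u) + C v := by
    rw [hv]; simp; ring
  rw [hr, ← taylor_taylor]
  set H := taylor (C v) G with hH
  have hH0 : ∀ l, (X - C u) ^ (K - l) ∣ H.coeff l := by
    intro l
    apply pow_dvd_of_taylor
    intro i hi
    exact hG0 i l (by omega)
  rw [taylor_coeff, eval_eq_sum_range]
  apply Finset.dvd_sum
  intro l _
  rw [hasseDeriv_coeff, mul_pow]
  have h1 : (X - C u) ^ (K - j) ∣ (X - C u) ^ (K - (l + j)) * (X - C u) ^ l := by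
    rw [← pow_add]; exact pow_dvd_pow _ (by omega)
  refine h1.trans ?_
  exact mul_dvd_mul ((hH0 _).mul_left _) (Dvd.intro_left _ rfl)

noncomputable def ptL (P : Finset (ℂ × ℂ)) (K : ℂ × ℂ → ℕ) (n : ℕ) :
    E3 →ₗ[ℂ] ((Σ p : P, Fin (n + 1) × Σ j : Fin (K p), Fin (K p - j)) → ℂ) where
  toFun F := fun x => gc x.1.1.1 x.1.1.2 ((toP F).coeff x.2.1) x.2.2.2 x.2.2.1
  map_add' a b := by ext; simp [gc]
  map_smul' c a := by
    ext x
    rw [toP_smul, coeff_C_mul, gc_C_C_mul]; rfl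

noncomputable def VP (P : Finset (ℂ × ℂ)) (K : ℂ × ℂ → ℕ) (n a : ℕ) : Submodule ℂ E3 :=
  WW n a ⊓ LinearMap.ker (ptL P K n)

lemma VP_finite (P : Finset (ℂ × ℂ)) (K : ℂ × ℂ → ℕ) (n a : ℕ) : Module.Finite ℂ (VP P K n a) := by
  have := WW_finite n a
  exact Module.Finite.of_injective (Submodule.inclusion (inf_le_left : VP P K n a ≤ WW n a))
      (Submodule.inclusion_injective _)

lemma VP_ge (P : Finset (ℂ × ℂ)) (K : ℂ × ℂ → ℕ) (n a : ℕ) :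
    Module.finrank ℂ (WW n a) ≤ Module.finrank ℂ (VP P K n a) +
      ∑ p ∈ P, (n + 1) * ∑ j ∈ Finset.range (K p), (K p - j) := by
  have := VP_finite P K n a
  have h := (rn (WW n a) (VP P K n a) (ptL P K n) ⊤ (by simp) (fun x hx h0 => ⟨hx, h0⟩)).2
  rw [finrank_top, Module.finrank_fintype_fun_eq_card] at h
  refine h.trans (le_of_eq ?_)
  congr 1
  simp only [Fintype.card_sigma, Fintype.card_prod, Fintype.card_fin]
  rw [← Finset.sum_coe_sort P]
  apply Finset.sum_congr rfl
  intro p _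
  rw [Finset.sum_range]

lemma VP_vanish {P : Finset (ℂ × ℂ)} {K : ℂ × ℂ → ℕ} {n a : ℕ} {F : E3} (hF : F ∈ VP P K n a)
    {p : ℂ × ℂ} (hp : p ∈ P) (k i j : ℕ) (hij : i + j < K p) :
    gc p.1 p.2 ((toP F).coeff k) i j = 0 := by
  obtain ⟨hW, h0⟩ := hF
  by_cases hk : k ≤ n
  · have hj : j < K p := by omega
    have hi : i < K p - j := by omega
    exact congrFun (show ptL P K n F = 0 from h0)
      ⟨⟨p, hp⟩, ⟨k, by omega⟩, ⟨j, hj⟩, ⟨i, hi⟩⟩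
  · have : (toP F).coeff k = 0 := coeff_eq_zero_of_natDegree_lt (hW.1.trans_lt (by omega))
    rw [this]; simp [gc]

/-- polynomials of bounded degree divisible by `D` -/
noncomputable def TT (D : ℂ[X]) (b : ℕ) : Submodule ℂ ℂ[X] :=
  (degreeLT ℂ (b - D.natDegree)).map (LinearMap.mulLeft ℂ D)

lemma dLT_finite (b : ℕ) : Module.Finite ℂ (degreeLT ℂ b) :=
  Module.Finite.equiv (degreeLTEquiv ℂ b).symm

lemma TT_finite (D : ℂ[X]) (b : ℕ) : Module.Finite ℂ (TT D b) := by
  have := dLT_finite (b - D.natDegree)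
  unfold TT; infer_instance

lemma TT_finrank (D : ℂ[X]) (b : ℕ) : Module.finrank ℂ (TT D b) ≤ b - D.natDegree := by
  have := dLT_finite (b - D.natDegree)
  refine (Submodule.finrank_map_le _ _).trans ?_
  rw [(degreeLTEquiv ℂ (b - D.natDegree)).finrank_eq]; simp

lemma mem_TT {D P : ℂ[X]} {b : ℕ} (h1 : D ∣ P) (h2 : P ∈ degreeLT ℂ b) : P ∈ TT D b := by
  by_cases hP : P = 0
  · rw [hP]; exact zero_mem _
  obtain ⟨Q, rfl⟩ := h1
  refine ⟨Q, ?_, rfl⟩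
  have hD := left_ne_zero_of_mul hP
  have hQ := right_ne_zero_of_mul hP
  rw [SetLike.mem_coe, mem_degreeLT, degree_eq_natDegree hQ]
  rw [mem_degreeLT, degree_eq_natDegree hP, natDegree_mul hD hQ] at h2
  have h3 : D.natDegree + Q.natDegree < b := by exact_mod_cast h2
  have : Q.natDegree < b - D.natDegree := by omega
  exact_mod_cast this

open Classical in
noncomputable def Zl (P : Finset (ℂ × ℂ)) (s t : ℂ) : Finset (ℂ × ℂ) :=
  P.filter fun p => p.2 = s * p.1 + t

noncomputable def DD (P : Finset (ℂ × ℂ)) (K : ℂ × ℂ → ℕ) (s t : ℂ) (j : ℕ) : ℂ[X] :=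
  ∏ p ∈ Zl P s t, (X - C p.1) ^ (K p - j)

lemma DD_natDegree (P : Finset (ℂ × ℂ)) (K : ℂ × ℂ → ℕ) (s t : ℂ) (j : ℕ) :
    (DD P K s t j).natDegree = ∑ p ∈ Zl P s t, (K p - j) := by
  unfold DD
  rw [natDegree_prod_of_monic _ _ (fun p _ => (monic_X_sub_C p.1).pow _)]
  simp

lemma DD_dvd (P : Finset (ℂ × ℂ)) (K : ℂ × ℂ → ℕ) (s t : ℂ) (j k n a : ℕ) (F : E3)
    (hF : F ∈ VP P K n a) : DD P K s t j ∣ gg s t (toP F) j k := by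
  apply Finset.prod_dvd_of_coprime
  · intro p hp q hq hpq
    apply IsCoprime.pow
    apply isCoprime_X_sub_C_of_isUnit_sub
    rw [isUnit_iff_ne_zero, sub_ne_zero]
    intro h
    apply hpq
    have h1 := (Finset.mem_filter.1 hp).2
    have h2 := (Finset.mem_filter.1 hq).2
    apply Prod.ext h
    rw [h1, h2, h]
  · intro p hp
    obtain ⟨hp1, hp2⟩ := Finset.mem_filter.1 hp
    exact dvd_gg _ _ _ _ _ _ hp2 (fun k i j hij => VP_vanish hF hp1 k i j hij) j k

/-- index set of the conditions along a line -/
def CC (N n : ℕ) : Finset (ℕ × ℕ) :=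
  (Finset.range (3 * n) ×ˢ Finset.range n).filter fun x => N * x.1 + 3 * x.2 < 3 * n

lemma mem_CC {N n : ℕ} (hN : 1 ≤ N) {x : ℕ × ℕ} : x ∈ CC N n ↔ N * x.1 + 3 * x.2 < 3 * n := by
  simp only [CC, Finset.mem_filter, Finset.mem_product, Finset.mem_range, and_iff_right_iff_imp]
  intro h
  have : x.1 ≤ N * x.1 := Nat.le_mul_of_pos_left _ hN
  omega

theorem main_ineq {ι : Type*} [Fintype ι] (s t : ι → ℂ) (hs : Function.Injective s)
    (ht : Function.Injective t) (hN3 : 3 ≤ Fintype.card ι)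
    (hmu : ∀ u v : ℂ, 3 * Nat.card {i // v = s i * u + t i} < 2 * Fintype.card ι)
    (P : Finset (ℂ × ℂ)) (K : ℂ × ℂ → ℕ) (n a : ℕ) :
    ∑ b ∈ Finset.range a, ∑ k ∈ Finset.range (n + 1), (b + n + 1 - k) ≤
      ∑ b ∈ Finset.range a, (n + 1) * (b + 1 - n)
      + ∑ p ∈ P, (n + 1) * ∑ j ∈ Finset.range (K p), (K p - j)
      + ∑ i, ∑ x ∈ CC (Fintype.card ι) n,
          (a - x.1 + x.2 - ∑ p ∈ Zl P (s i) (t i), (K p - x.1)) := by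
  have h1 := WW_ge n a
  have h2 := VP_ge P K n a
  have h3 := SS_le s t hs ht (by omega) hmu n a
  have := VP_finite P K n a
  have : Module.Finite ℂ (SS s t n a) := by
    have := WW_finite n a
    exact Module.Finite.of_injective (Submodule.inclusion (inf_le_left : SS s t n a ≤ WW n a))
      (Submodule.inclusion_injective _)
  let T : ι × (ℕ × ℕ) → Submodule ℂ ℂ[X] := fun c =>
    TT (DD P K (s c.1) (t c.1) c.2.1) (a - c.2.1 + c.2.2)
  have : ∀ c, Module.Finite ℂ (T c) := fun c => TT_finite _ _
  have h4 := conds (VP P K n a) (fun c : ι × (ℕ × ℕ) => c.2.1)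
    (fun c => ggL (s c.1) (t c.1) c.2.1 c.2.2) T (Finset.univ ×ˢ CC (Fintype.card ι) n) (by
      rintro F hF ⟨i, j, k⟩ hc hlt
      apply mem_TT
      · exact DD_dvd P K (s i) (t i) j k n a F hF
      · refine (key_deg a (toP F) hF.1.2 (s i) (t i) j k ?_).1
        intro j' k' hjk hj
        refine hlt ⟨i, j', k'⟩ ?_ hj
        rw [Finset.mem_product, mem_CC (by omega)] at hc ⊢
        refine ⟨Finset.mem_univ _, ?_⟩
        have hc2 := hc.2
        simp only at hc2 ⊢
        obtain ⟨d, rfl⟩ := Nat.exists_eq_add_of_le hj.le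
        have : k' = k + d := by omega
        subst this
        nlinarith) (SS s t n a) (by
      intro F hF h0
      rw [mem_SS]
      refine ⟨hF.1, fun i j k hjk => ?_⟩
      exact h0 ⟨i, j, k⟩ (Finset.mem_product.2 ⟨Finset.mem_univ _, (mem_CC (by omega)).2 hjk⟩))
  have h5 : ∑ c ∈ Finset.univ ×ˢ CC (Fintype.card ι) n, Module.finrank ℂ (T c) ≤
      ∑ i, ∑ x ∈ CC (Fintype.card ι) n,
          (a - x.1 + x.2 - ∑ p ∈ Zl P (s i) (t i), (K p - x.1)) := by
    rw [Finset.sum_product]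
    apply Finset.sum_le_sum
    intro i _
    apply Finset.sum_le_sum
    intro x _
    rw [← DD_natDegree]
    exact TT_finrank _ _
  omega

end LineArr

namespace LineArr

lemma sum_lin (M : ℕ) (α β γ : ℝ) : ∑ j ∈ Finset.range M, (α + β * j + γ * (j : ℝ) ^ 2) =
    α * M + β * (M * (M - 1) / 2) + γ * (M * (M - 1) * (2 * M - 1) / 6) := by
  induction M with
  | zero => simp
  | succ k ih => rw [Finset.sum_range_succ, ih]; push_cast; ring

lemma sum_ramp (n d : ℕ) : ((∑ b ∈ Finset.range (n + d), (b + 1 - n) : ℕ) : ℝ) =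
    d * (d + 1) / 2 := by
  induction d with
  | zero =>
    have : ∑ b ∈ Finset.range (n + 0), (b + 1 - n) = 0 := by
      apply Finset.sum_eq_zero
      intro b hb
      rw [Finset.mem_range] at hb
      omega
    rw [this]; simp
  | succ k ih =>
    rw [← add_assoc, Finset.sum_range_succ, Nat.cast_add, ih]
    have : n + k + 1 - n = k + 1 := by omega
    rw [this]; push_cast; ring

lemma sum_tri (K : ℕ) : ((∑ j ∈ Finset.range K, (K - j) : ℕ) : ℝ) = K * (K + 1) / 2 := by
  have h : ∑ j ∈ Finset.range K, (K - j) = ∑ b ∈ Finset.range (0 + K), (b + 1 - 0) := by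
    rw [zero_add, ← Finset.sum_range_reflect]
    apply Finset.sum_congr rfl
    intro j hj
    rw [Finset.mem_range] at hj
    omega
  rw [h, sum_ramp]

lemma sum_lhs (n a : ℕ) :
    ((∑ b ∈ Finset.range a, ∑ k ∈ Finset.range (n + 1), (b + n + 1 - k) : ℕ) : ℝ) =
      (n + 1) * a * (a + n + 1) / 2 := by
  have h : ∀ b : ℕ, ((∑ k ∈ Finset.range (n + 1), (b + n + 1 - k) : ℕ) : ℝ) =
      ((n + 1) * (n + 1) - n * (n + 1) / 2) + (n + 1 : ℝ) * b + 0 * (b : ℝ) ^ 2 := by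
    intro b
    have : ((∑ k ∈ Finset.range (n + 1), (b + n + 1 - k) : ℕ) : ℝ) =
        ∑ k ∈ Finset.range (n + 1), ((b + n + 1 : ℝ) + (-1) * k + 0 * (k : ℝ) ^ 2) := by
      rw [Nat.cast_sum]
      apply Finset.sum_congr rfl
      intro k hk
      rw [Finset.mem_range] at hk
      rw [Nat.cast_sub (by omega)]
      push_cast; ring
    rw [this, sum_lin]
    push_cast; ring
  rw [Nat.cast_sum, Finset.sum_congr rfl (fun b _ => h b), sum_lin]
  ring

lemma cubic_le (a b c d : ℝ) (h : ∀ m : ℕ, a * m ^ 3 + b * m ^ 2 + c * m + d ≤ 0) : a ≤ 0 := by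
  by_contra ha
  push Not at ha
  obtain ⟨m, hm⟩ := exists_nat_gt (1 + (|b| + |c| + |d|) / a)
  have h1 := h m
  have hq : 0 ≤ (|b| + |c| + |d|) / a := by positivity
  have hm1 : (1 : ℝ) < m := by linarith
  have h2 : |b| + |c| + |d| < a * m := by
    have : (|b| + |c| + |d|) / a < m := by linarith
    rw [div_lt_iff₀ ha] at this
    linarith
  have hm2 : (m : ℝ) ≤ m ^ 2 := by nlinarith
  have e1 : -|b| * m ^ 2 ≤ b * m ^ 2 := mul_le_mul_of_nonneg_right (neg_abs_le b) (by positivity)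
  have e2 : -|c| * m ^ 2 ≤ c * m := by
    have := mul_le_mul_of_nonneg_right (neg_abs_le c) (by positivity : (0:ℝ) ≤ m)
    nlinarith [abs_nonneg c]
  have e3 : -|d| * m ^ 2 ≤ d := by
    nlinarith [abs_nonneg d, neg_abs_le d]
  have e4 : (|b| + |c| + |d|) * m ^ 2 < a * m * m ^ 2 :=
    mul_lt_mul_of_pos_right h2 (by positivity)
  nlinarith

lemma CC_sum (N m : ℕ) (hN : 1 ≤ N) (g : ℕ → ℕ → ℝ) :
    ∑ x ∈ CC N (2 * N * m), g x.1 x.2 = ∑ j ∈ Finset.range (6 * m),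
      ∑ k ∈ Finset.range ((N * (6 * m - j) + 2) / 3), g j k := by
  apply Finset.sum_finset_product' (f := g)
  rintro ⟨j, k⟩
  rw [mem_CC hN]
  simp only [Finset.mem_range]
  constructor
  · intro h
    have hj : j < 6 * m := by
      by_contra hc
      push Not at hc
      have := Nat.mul_le_mul_left N hc
      nlinarith
    refine ⟨hj, ?_⟩
    obtain ⟨d, hd⟩ := Nat.exists_eq_add_of_le hj.le
    have : 6 * m - j = d := by omega
    rw [this]
    have h3 : N * j + N * d = 3 * (2 * N * m) := by rw [← mul_add, ← hd]; ring
    generalize N * d = y at *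
    generalize N * j = z at *
    omega
  · rintro ⟨hj, hk⟩
    obtain ⟨d, hd⟩ := Nat.exists_eq_add_of_le hj.le
    have : 6 * m - j = d := by omega
    rw [this] at hk
    have h3 : N * j + N * d = 3 * (2 * N * m) := by rw [← mul_add, ← hd]; ring
    generalize N * d = y at *
    generalize N * j = z at *
    omega

lemma CC_bound (N m : ℕ) (hN : 1 ≤ N) (E D : ℝ) (hE : 0 ≤ E) (hD : 0 ≤ D) :
    ∑ x ∈ CC N (2 * N * m), (E + D * x.1 + N * x.2) ≤ ∑ j ∈ Finset.range (6 * m),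
      (((N * (6 * m - j) / 3 : ℝ) + 1) * (E + D * j) +
        N * ((N * (6 * m - j) / 3 + 1) * (N * (6 * m - j) / 3) / 2)) := by
  rw [CC_sum N m hN (fun j k => E + D * j + N * k)]
  apply Finset.sum_le_sum
  intro j hj
  rw [Finset.mem_range] at hj
  set B := (N * (6 * m - j) + 2) / 3 with hB
  have hB0 : 1 ≤ B := by
    have : 1 ≤ N * (6 * m - j) := Nat.mul_pos hN (by omega)
    omega
  have hB1 : (B : ℝ) ≤ N * (6 * m - j) / 3 + 1 := by
    have : 3 * B ≤ N * (6 * m - j) + 2 := by omega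
    have h : (3 * B : ℝ) ≤ N * (6 * m - j) + 2 := by
      have h' : ((3 * B : ℕ) : ℝ) ≤ ((N * (6 * m - j) + 2 : ℕ) : ℝ) := by exact_mod_cast this
      rw [Nat.cast_add, Nat.cast_mul N, Nat.cast_sub hj.le] at h'
      push_cast at h'
      exact h'
    linarith
  have hs : ∑ k ∈ Finset.range B, (E + D * j + N * k : ℝ) =
      (E + D * j) * B + N * (B * (B - 1) / 2) := by
    have := sum_lin B (E + D * j) N 0
    simp only [zero_mul, add_zero] at this
    exact this
  rw [hs]
  generalize (N * (6 * m - j) / 3 : ℝ) = x at *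
  have hB0' : (1 : ℝ) ≤ B := by exact_mod_cast hB0
  have h1 : (E + D * j) * B ≤ (x + 1) * (E + D * j) := by
    rw [mul_comm]
    exact mul_le_mul_of_nonneg_right hB1 (by positivity)
  have h2 : (B * (B - 1) : ℝ) ≤ (x + 1) * x := by nlinarith
  have h3 : (N : ℝ) * (B * (B - 1) / 2) ≤ N * ((x + 1) * x / 2) :=
    mul_le_mul_of_nonneg_left (by linarith) (by positivity)
  linarith

end LineArr

namespace LineArr

section comb
variable {ι : Type*} [Fintype ι] (s t : ι → ℂ)

open Classical in
noncomputable def on (p : ℂ × ℂ) : Finset ι := Finset.univ.filter fun i => p.2 = s i * p.1 + t i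

noncomputable def mu (p : ℂ × ℂ) : ℕ := (on s t p).card

noncomputable def cross (i i' : ι) : ℂ × ℂ :=
  ((t i' - t i) / (s i - s i'), s i * ((t i' - t i) / (s i - s i')) + t i)

open Classical in
noncomputable def PP : Finset (ℂ × ℂ) :=
  (Finset.univ : Finset ι).offDiag.image fun x => cross s t x.1 x.2

lemma mem_on (p : ℂ × ℂ) (i : ι) : i ∈ on s t p ↔ p.2 = s i * p.1 + t i := by simp [on]

lemma cross_spec (hs : Function.Injective s) {i i' : ι} (h : i ≠ i') (p : ℂ × ℂ) :
    p = cross s t i i' ↔ i ∈ on s t p ∧ i' ∈ on s t p := by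
  have h0 : s i - s i' ≠ 0 := fun h' => h (hs (sub_eq_zero.1 h'))
  rw [mem_on, mem_on]
  constructor
  · rintro rfl
    refine ⟨rfl, ?_⟩
    simp only [cross]
    field_simp
    ring
  · rintro ⟨h1, h2⟩
    have : p.1 = (t i' - t i) / (s i - s i') := by
      rw [eq_div_iff h0]
      linear_combination h2 - h1
    ext
    · exact this
    · simp only [cross]; rw [← this]; exact h1

lemma mem_PP (hs : Function.Injective s) (p : ℂ × ℂ) : p ∈ PP s t ↔ 2 ≤ mu s t p := by
  rw [PP, Finset.mem_image, mu, ← Nat.lt_iff_add_one_le, Finset.one_lt_card]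
  constructor
  · rintro ⟨⟨i, i'⟩, h, rfl⟩
    have hne : i ≠ i' := by simpa using h
    have := (cross_spec s t hs hne _).1 rfl
    exact ⟨i, this.1, i', this.2, hne⟩
  · rintro ⟨i, h1, i', h2, hne⟩
    exact ⟨(i, i'), by simpa using hne, ((cross_spec s t hs hne _).2 ⟨h1, h2⟩).symm⟩

lemma mem_Zl (P : Finset (ℂ × ℂ)) (i : ι) (p : ℂ × ℂ) :
    p ∈ Zl P (s i) (t i) ↔ p ∈ P ∧ i ∈ on s t p := by
  rw [mem_on]; simp [Zl]

lemma line_count (hs : Function.Injective s) (i : ι) :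
    ∑ p ∈ Zl (PP s t) (s i) (t i), (mu s t p - 1) = Fintype.card ι - 1 := by
  classical
  have h := Finset.card_eq_sum_card_fiberwise (f := fun i' => cross s t i i')
    (s := Finset.univ.erase i) (t := Zl (PP s t) (s i) (t i)) (by
      intro i' hi'
      have hne : i ≠ i' := by
        have : i' ≠ i := by simpa using hi'
        exact this.symm
      have := (cross_spec s t hs hne _).1 rfl
      rw [Finset.mem_coe, mem_Zl]
      exact ⟨Finset.mem_image.2 ⟨(i, i'), by simpa using hne, rfl⟩, this.1⟩)
  rw [Finset.card_erase_of_mem (Finset.mem_univ _), Finset.card_univ] at h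
  rw [h]
  apply Finset.sum_congr rfl
  intro p hp
  rw [mem_Zl] at hp
  rw [mu, ← Finset.card_erase_of_mem hp.2]
  congr 1
  ext i'
  simp only [Finset.mem_erase, Finset.mem_filter, Finset.mem_univ, and_true]
  constructor
  · rintro ⟨h1, h2⟩
    exact ⟨h1, ((cross_spec s t hs (Ne.symm h1) _).2 ⟨hp.2, h2⟩).symm⟩
  · rintro ⟨h1, h2⟩
    exact ⟨h1, ((cross_spec s t hs (Ne.symm h1) _).1 h2.symm).2⟩

lemma line_count' (hs : Function.Injective s) (i : ι) :
    ∑ p ∈ Zl (PP s t) (s i) (t i), mu s t p + 1 =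
      Fintype.card ι + (Zl (PP s t) (s i) (t i)).card := by
  have h := line_count s t hs i
  have : 0 < Fintype.card ι := Fintype.card_pos_iff.2 ⟨i⟩
  have h2 : ∑ p ∈ Zl (PP s t) (s i) (t i), mu s t p =
      ∑ p ∈ Zl (PP s t) (s i) (t i), ((mu s t p - 1) + 1) := by
    apply Finset.sum_congr rfl
    intro p hp
    rw [mem_Zl, mem_PP s t hs] at hp
    omega
  rw [h2, Finset.sum_add_distrib, h]
  simp
  omega

lemma Zl_card_le (hs : Function.Injective s) (i : ι) :
    (Zl (PP s t) (s i) (t i)).card ≤ Fintype.card ι - 1 := by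
  rw [← line_count s t hs i, Finset.card_eq_sum_ones]
  apply Finset.sum_le_sum
  intro p hp
  rw [mem_Zl, mem_PP s t hs] at hp
  omega

lemma Zl_card_pos (hs : Function.Injective s) (hN : 2 ≤ Fintype.card ι) (i : ι) :
    1 ≤ (Zl (PP s t) (s i) (t i)).card := by
  by_contra h
  have : Zl (PP s t) (s i) (t i) = ∅ := by
    rw [← Finset.card_eq_zero]; omega
  have h1 := line_count s t hs i
  rw [this] at h1
  simp at h1
  omega

lemma double_count (f : ℂ × ℂ → ℝ) :
    ∑ i, ∑ p ∈ Zl (PP s t) (s i) (t i), f p = ∑ p ∈ PP s t, mu s t p * f p := by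
  classical
  have : ∀ i, ∑ p ∈ Zl (PP s t) (s i) (t i), f p =
      ∑ p ∈ PP s t, if i ∈ on s t p then f p else 0 := by
    intro i
    rw [← Finset.sum_filter]
    apply Finset.sum_congr _ (fun _ _ => rfl)
    ext p
    rw [mem_Zl, Finset.mem_filter]
  simp_rw [this]
  rw [Finset.sum_comm]
  apply Finset.sum_congr rfl
  intro p _
  rw [← Finset.sum_filter]
  simp [mu]

lemma card_eq_mu (u v : ℂ) : Nat.card {i // v = s i * u + t i} = mu s t (u, v) := by
  classical
  rw [Nat.card_eq_fintype_card, Fintype.card_subtype, mu]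
  congr 1

set_option maxHeartbeats 2000000 in
theorem affine_ineq (hs : Function.Injective s)
    (ht : Function.Injective t) (hN : 1 ≤ Fintype.card ι)
    (hmu : ∀ p : ℂ × ℂ, 3 * mu s t p < 2 * Fintype.card ι) :
    Fintype.card ι ^ 2 + 3 * Fintype.card ι ≤ 3 * ∑ p ∈ PP s t, mu s t p := by
  classical
  obtain ⟨i0⟩ : Nonempty ι := Fintype.card_pos_iff.1 hN
  have hN2 : 2 ≤ Fintype.card ι := by
    have h := hmu (0, t i0)
    have : 0 < mu s t (0, t i0) := Finset.card_pos.2 ⟨i0, by simp [mem_on]⟩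
    omega
  have hN4 : 4 ≤ Fintype.card ι := by
    obtain ⟨p, hp⟩ := Finset.card_pos.1 (Zl_card_pos s t hs hN2 i0)
    rw [mem_Zl, mem_PP s t hs] at hp
    have h := hmu p
    omega
  have hm := main_ineq s t hs ht (by omega) (fun u v => by rw [card_eq_mu]; exact hmu _)
    (PP s t)
  set N := Fintype.card ι with hNdef
  set T : ℝ := ∑ p ∈ PP s t, (mu s t p : ℝ) with hT
  set r : ι → ℝ := fun i => ((Zl (PP s t) (s i) (t i)).card : ℝ) with hr
  have hrT : ∑ i, r i = T := by
    have := double_count s t (fun _ => 1)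
    simp only [Finset.sum_const, nsmul_eq_mul, mul_one] at this
    exact this
  have hline : ∀ i, ∑ p ∈ Zl (PP s t) (s i) (t i), (mu s t p : ℝ) = N - 1 + r i := by
    intro i
    have : ((∑ p ∈ Zl (PP s t) (s i) (t i), mu s t p + 1 : ℕ) : ℝ) =
      ((Fintype.card ι + (Zl (PP s t) (s i) (t i)).card : ℕ) : ℝ) :=
      congrArg _ (line_count' s t hs i)
    push_cast at this
    simp only [hr, hNdef]
    linarith
  have hQ : ∑ p ∈ PP s t, (mu s t p : ℝ) ^ 2 = N ^ 2 - N + T := by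
    have h := double_count s t (fun p => (mu s t p : ℝ))
    simp only [hline] at h
    rw [Finset.sum_add_distrib, hrT] at h
    simp only [Finset.sum_const, Finset.card_univ, nsmul_eq_mul, ← hNdef] at h
    simp only [pow_two]
    rw [← h]; ring
  have hr1 : ∀ i, 1 ≤ r i := fun i => Nat.one_le_cast.2 (Zl_card_pos s t hs hN2 i)
  have hrN : ∀ i, r i ≤ N - 1 := fun i => by
    have h := Zl_card_le s t hs i
    have : ((Zl (PP s t) (s i) (t i)).card : ℝ) + 1 ≤ N := by
      exact_mod_cast (by omega : (Zl (PP s t) (s i) (t i)).card + 1 ≤ N)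
    simp only [hr]; linarith
  have hTN : (N : ℝ) ≤ T := by
    rw [← hrT]
    calc (N : ℝ) = ∑ i : ι, (1 : ℝ) := by simp [hNdef]
      _ ≤ _ := Finset.sum_le_sum fun i _ => hr1 i
  have hTN2 : T ≤ N * (N - 1) := by
    rw [← hrT]
    calc _ ≤ ∑ i : ι, ((N : ℝ) - 1) := Finset.sum_le_sum fun i _ => hrN i
      _ = _ := by rw [Finset.sum_const, Finset.card_univ, nsmul_eq_mul]
  have hNr : (4 : ℝ) ≤ N := by exact_mod_cast hN4
  have key : ∀ m : ℕ, ((N : ℝ) ^ 3 + 3 * N ^ 2 - 3 * N * T) * m ^ 3 +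
      (-(21 / 2) * N ^ 2 + 9 / 2 * N - 9 / 2 * T - 4 * N ^ 3) * m ^ 2 +
      (-5 * N + 3 / 2 * T - 11 / 6 * N ^ 2 + 1 / 3 * N * T - 1 / 18 * N ^ 3) * m + 0 ≤ 0 := by
    intro m
    have h := hm (fun p => 3 * mu s t p * m) (2 * N * m) (6 * N * m + 1)
    have hR : ((∑ b ∈ Finset.range (6 * N * m + 1), ∑ k ∈ Finset.range (2 * N * m + 1),
        (b + 2 * N * m + 1 - k) : ℕ) : ℝ) ≤ ((_ : ℕ) : ℝ) := Nat.cast_le.2 h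
    rw [sum_lhs, Nat.cast_add (_ + _) (Finset.sum _ _),
      Nat.cast_add (Finset.sum _ _) (Finset.sum _ _)] at hR
    have hA : ((∑ b ∈ Finset.range (6 * N * m + 1), (2 * N * m + 1) * (b + 1 - 2 * N * m) : ℕ) : ℝ)
        = (2 * N * m + 1) * ((4 * N * m + 1) * (4 * N * m + 2) / 2) := by
      have := sum_ramp (2 * N * m) (4 * N * m + 1)
      have e : 2 * N * m + (4 * N * m + 1) = 6 * N * m + 1 := by ring
      rw [e] at this
      rw [← Finset.mul_sum, Nat.cast_mul, this]
      push_cast; ring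
    have hB : ((∑ p ∈ PP s t, (2 * N * m + 1) * ∑ j ∈ Finset.range (3 * mu s t p * m),
        (3 * mu s t p * m - j) : ℕ) : ℝ) =
        (2 * N * m + 1) * ((9 * m ^ 2 * (N ^ 2 - N + T) + 3 * m * T) / 2) := by
      have e : 9 * (m : ℝ) ^ 2 * (N ^ 2 - N + T) + 3 * m * T =
          ∑ p ∈ PP s t, (9 * (m : ℝ) ^ 2 * (mu s t p : ℝ) ^ 2 + 3 * m * mu s t p) := by
        rw [Finset.sum_add_distrib, ← Finset.mul_sum, ← Finset.mul_sum, hQ]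
      rw [← Finset.mul_sum, Nat.cast_mul, Nat.cast_sum, e, Finset.sum_div,
        Finset.sum_congr rfl (fun p _ => sum_tri (3 * mu s t p * m))]
      push_cast
      congr 1
      apply Finset.sum_congr rfl
      intro p _
      ring
    have hC1 : ∀ i, ∀ x ∈ CC N (2 * N * m), ((6 * N * m + 1 - x.1 + x.2 -
        ∑ p ∈ Zl (PP s t) (s i) (t i), (3 * mu s t p * m - x.1) : ℕ) : ℝ) =
        6 * N * m + 1 - x.1 + x.2 - 3 * m * (N - 1 + r i) + r i * x.1 := by
      intro i x hx
      rw [mem_CC (by omega)] at hx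
      have hx1 : x.1 < 6 * m := by
        by_contra hc
        push Not at hc
        have := Nat.mul_le_mul_left N hc
        nlinarith
      have hx2 : x.1 ≤ 6 * N * m + 1 := by nlinarith
      have hsum : ((∑ p ∈ Zl (PP s t) (s i) (t i), (3 * mu s t p * m - x.1) : ℕ) : ℝ) =
          3 * m * (N - 1 + r i) - r i * x.1 := by
        rw [← hline i, Finset.mul_sum, Nat.cast_sum]
        have : r i * x.1 = ∑ p ∈ Zl (PP s t) (s i) (t i), (x.1 : ℝ) := by
          rw [Finset.sum_const, nsmul_eq_mul]
        rw [this, ← Finset.sum_sub_distrib]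
        apply Finset.sum_congr rfl
        intro p hp
        rw [mem_Zl, mem_PP s t hs] at hp
        have : 6 * m ≤ 3 * mu s t p * m := by nlinarith [hp.1]
        rw [Nat.cast_sub (by omega)]
        push_cast; ring
      have hge : ∑ p ∈ Zl (PP s t) (s i) (t i), (3 * mu s t p * m - x.1) ≤
          6 * N * m + 1 - x.1 + x.2 := by
        have : ((∑ p ∈ Zl (PP s t) (s i) (t i), (3 * mu s t p * m - x.1) : ℕ) : ℝ) ≤
          ((6 * N * m + 1 - x.1 + x.2 : ℕ) : ℝ) := by
          rw [hsum, Nat.cast_add, Nat.cast_sub hx2]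
          push_cast
          have h1 := hr1 i
          have h2 := hrN i
          have h3 : 0 ≤ (r i - 1) * x.1 := mul_nonneg (by linarith) (by positivity)
          have h4 : (m : ℝ) * r i ≤ m * (N - 1) := mul_le_mul_of_nonneg_left h2 (by positivity)
          have h5 : (0 : ℝ) ≤ x.2 := by positivity
          have h6 : (0 : ℝ) ≤ m := by positivity
          nlinarith
        exact_mod_cast this
      rw [Nat.cast_sub hge, hsum, Nat.cast_add, Nat.cast_sub hx2]
      push_cast; ring
    set E : ℝ := N * (6 * N * m + 1) - 3 * m * (N ^ 2 - N + T) with hE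
    have hE0 : 0 ≤ E := by
      have h4 : (m : ℝ) * T ≤ m * (N * (N - 1)) := mul_le_mul_of_nonneg_left hTN2 (by positivity)
      have h6 : (0 : ℝ) ≤ m * N := by positivity
      rw [hE]
      nlinarith
    have hC2 : ((∑ i, ∑ x ∈ CC N (2 * N * m), (6 * N * m + 1 - x.1 + x.2 -
        ∑ p ∈ Zl (PP s t) (s i) (t i), (3 * mu s t p * m - x.1)) : ℕ) : ℝ) =
        ∑ x ∈ CC N (2 * N * m), (E + (T - N) * x.1 + N * x.2) := by
      rw [Finset.sum_comm, Nat.cast_sum]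
      apply Finset.sum_congr rfl
      intro x hx
      rw [Nat.cast_sum, Finset.sum_congr rfl (fun i _ => hC1 i x hx)]
      have e : ∑ i, ((N : ℝ) - 1 + r i) = N * (N - 1) + T := by
        rw [Finset.sum_add_distrib, hrT, Finset.sum_const, Finset.card_univ, nsmul_eq_mul]
      rw [Finset.sum_add_distrib, ← Finset.sum_mul, Finset.sum_sub_distrib, ← Finset.mul_sum,
        e, hrT]
      simp only [Finset.sum_const, Finset.card_univ, nsmul_eq_mul, ← hNdef]
      rw [hE]; ring
    have hC3 := CC_bound N m (by omega) E (T - N) hE0 (by linarith)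
    have hC4 : ∑ j ∈ Finset.range (6 * m),
      (((N * (6 * m - j) / 3 : ℝ) + 1) * (E + (T - N) * j) +
        N * ((N * (6 * m - j) / 3 + 1) * (N * (6 * m - j) / 3) / 2)) =
        ∑ j ∈ Finset.range (6 * m), (((2 * N * m + 1) * E + N / 2 * (2 * N * m + 1) * (2 * N * m))
          + ((2 * N * m + 1) * (T - N) - N * E / 3 - N ^ 2 / 6 * (4 * N * m + 1)) * j
          + (-(N * (T - N) / 3) + N ^ 3 / 18) * (j : ℝ) ^ 2) := by
      apply Finset.sum_congr rfl
      intro j _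
      ring
    rw [hC4, sum_lin, ← hC2] at hC3
    rw [hA, hB] at hR
    have hfin := hR.trans (add_le_add_right hC3 _)
    rw [hE] at hfin
    push_cast at hfin
    linarith
  have h3 := cubic_le _ _ _ _ key
  have h4 : (N : ℝ) ^ 2 + 3 * N ≤ 3 * T := by
    have : (N : ℝ) * (N ^ 2 + 3 * N - 3 * T) ≤ 0 := by linarith
    by_contra hc
    push Not at hc
    have : 0 < (N : ℝ) * (N ^ 2 + 3 * N - 3 * T) := mul_pos (by linarith) (by linarith)
    linarith
  rw [hT] at h4
  exact_mod_cast h4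

end comb

end LineArr

end LineArrSection


/-- The multiplicity of a point `p` of `ℂP²` (a 1-dimensional subspace of `ℂ³`)
with respect to an arrangement of lines `L` (2-dimensional subspaces):
the number of lines of `L` containing `p`. -/
noncomputable def lineMult (L : Finset (Submodule ℂ (Fin 3 → ℂ)))
    (p : Submodule ℂ (Fin 3 → ℂ)) : ℕ :=
  Set.ncard {ℓ : Submodule ℂ (Fin 3 → ℂ) | ℓ ∈ L ∧ p ≤ ℓ}

namespace LineArr

abbrev V3 := Fin 3 → ℂ

lemma exists_ne {κ : Type*} [Finite κ] (f : κ → Module.Dual ℂ V3) (h : ∀ i, f i ≠ 0) :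
    ∃ x, ∀ i, f i x ≠ 0 := by
  apply Module.Dual.exists_forall_ne_zero_of_forall_exists f
  intro i
  by_contra hc
  push Not at hc
  exact h i (LinearMap.ext hc)

lemma exists_ann (p : Submodule ℂ V3) (hp : Module.finrank ℂ p ≤ 2) :
    ∃ f : Module.Dual ℂ V3, f ≠ 0 ∧ p ≤ LinearMap.ker f := by
  apply Submodule.exists_le_ker_of_lt_top
  rw [lt_top_iff_ne_top]
  rintro rfl
  simp at hp

lemma exists_fun (p : Submodule ℂ V3) (hp : Module.finrank ℂ p = 2) :
    ∃ f : Module.Dual ℂ V3, f ≠ 0 ∧ LinearMap.ker f = p := by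
  obtain ⟨f, h0, h⟩ := exists_ann p hp.le
  refine ⟨f, h0, ?_⟩
  symm
  apply Submodule.eq_of_le_of_finrank_le h
  have h1 : Module.finrank ℂ (LinearMap.ker f) < Module.finrank ℂ V3 := by
    apply Submodule.finrank_lt
    rw [Ne, LinearMap.ker_eq_top]; exact h0
  have h2 : Module.finrank ℂ V3 = 3 := by simp
  omega

lemma inf_eq {ℓ ℓ' p : Submodule ℂ V3} (h : Module.finrank ℂ ℓ = 2) (h' : Module.finrank ℂ ℓ' = 2)
    (hne : ℓ ≠ ℓ') (hp : Module.finrank ℂ p = 1) (h1 : p ≤ ℓ) (h2 : p ≤ ℓ') : p = ℓ ⊓ ℓ' := by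
  apply Submodule.eq_of_le_of_finrank_le (le_inf h1 h2)
  have h3 := Submodule.finrank_sup_add_finrank_inf_eq ℓ ℓ'
  have h4 : ℓ < ℓ ⊔ ℓ' := by
    rw [lt_iff_le_and_ne]
    refine ⟨le_sup_left, fun he => hne ?_⟩
    symm
    apply Submodule.eq_of_le_of_finrank_eq
    · rw [he]; exact le_sup_right
    · omega
  have := Submodule.finrank_lt_finrank_of_lt h4
  omega

lemma multiple_finite (L : Finset (Submodule ℂ V3)) (hL : ∀ ℓ ∈ L, Module.finrank ℂ ℓ = 2) :
    {p : Submodule ℂ V3 | Module.finrank ℂ p = 1 ∧ 2 ≤ lineMult L p}.Finite := by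
  apply Set.Finite.subset ((L ×ˢ L).finite_toSet.image fun x => x.1 ⊓ x.2)
  rintro p ⟨hp, hm⟩
  have hfin : {ℓ : Submodule ℂ V3 | ℓ ∈ L ∧ p ≤ ℓ}.Finite :=
    L.finite_toSet.subset fun ℓ h => h.1
  obtain ⟨ℓ, h1, ℓ', h2, hne⟩ := (Set.one_lt_ncard hfin).1 hm
  refine ⟨(ℓ, ℓ'), by simp [h1.1, h2.1], ?_⟩
  exact (inf_eq (hL _ h1.1) (hL _ h2.1) hne hp h1.2 h2.2).symm

lemma exists_frame {ι : Type*} [Fintype ι] (h : ι → Module.Dual ℂ V3)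
    (h0 : ∀ i, h i ≠ 0) (hinj : Function.Injective fun i => LinearMap.ker (h i)) :
    ∃ e0 e1 e2 : V3, (∀ i, h i e2 ≠ 0) ∧
      (∀ i j, i ≠ j → h j e2 * h i e1 - h i e2 * h j e1 ≠ 0) ∧
      (∀ i j, i ≠ j → h j e2 * h i e0 - h i e2 * h j e0 ≠ 0) ∧
      e2 ≠ 0 ∧
      ∃ d0 d1 : Module.Dual ℂ V3, d1 e2 = 0 ∧ d1 e1 ≠ 0 ∧ d0 e2 = 0 ∧ d0 e1 = 0 ∧ d0 e0 ≠ 0 := by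
  classical
  have hk : ∃ k : Module.Dual ℂ V3, k ≠ 0 := by
    obtain ⟨f, hf, _⟩ := exists_ann ⊥ (by simp)
    exact ⟨f, hf⟩
  obtain ⟨k, hk⟩ := hk
  obtain ⟨e2, he2⟩ := exists_ne (fun o : Option ι => o.elim k h) (by rintro (_ | i) <;> simp [hk, h0])
  have he2' : ∀ i, h i e2 ≠ 0 := fun i => he2 (some i)
  have he20 : e2 ≠ 0 := by
    rintro rfl
    exact he2 none (by simp)
  let G : {x : ι × ι // x.1 ≠ x.2} → Module.Dual ℂ V3 := fun x =>
    h x.1.2 e2 • h x.1.1 - h x.1.1 e2 • h x.1.2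
  have hG : ∀ x, G x ≠ 0 := by
    rintro ⟨⟨i, j⟩, hij⟩ hc
    have hc' : h j e2 • h i = h i e2 • h j := sub_eq_zero.1 hc
    apply hij
    apply hinj
    have e1 := LinearMap.ker_smul (h i) (h j e2) (he2' j)
    have e2 := LinearMap.ker_smul (h j) (h i e2) (he2' i)
    change LinearMap.ker (h i) = LinearMap.ker (h j)
    rw [← e1, hc', e2]
  obtain ⟨d1, hd1, hd1k⟩ := exists_ann (Submodule.span ℂ {e2}) (by
    rw [finrank_span_singleton he20]; norm_num)
  obtain ⟨e1, he1⟩ := exists_ne (fun o : Option _ => o.elim d1 G)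
    (by rintro (_ | i) <;> simp [hd1, hG])
  obtain ⟨d0, hd0, hd0k⟩ := exists_ann (Submodule.span ℂ ({e1, e2} : Finset V3)) (by
    exact (finrank_span_finset_le_card _).trans Finset.card_le_two)
  obtain ⟨e0, he0⟩ := exists_ne (fun o : Option _ => o.elim d0 G)
    (by rintro (_ | i) <;> simp [hd0, hG])
  refine ⟨e0, e1, e2, he2', ?_, ?_, he20, d0, d1, ?_, he1 none, ?_, ?_, he0 none⟩
  · intro i j hij
    simpa [G] using he1 (some ⟨(i, j), hij⟩)
  · intro i j hij
    simpa [G] using he0 (some ⟨(i, j), hij⟩)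
  · exact hd1k (Submodule.mem_span_singleton_self _)
  · exact hd0k (Submodule.subset_span (by simp))
  · exact hd0k (Submodule.subset_span (by simp))

theorem transfer
    (L : Finset (Submodule ℂ (Fin 3 → ℂ)))
    (hL : ∀ ℓ ∈ L, Module.finrank ℂ ℓ = 2)
    (hmult : ∀ p : Submodule ℂ (Fin 3 → ℂ), Module.finrank ℂ p = 1 →
      3 * lineMult L p < 2 * L.card) :
    L.card ^ 2 + 3 * L.card ≤
      3 * ∑ᶠ p ∈ {p : Submodule ℂ (Fin 3 → ℂ) |
        Module.finrank ℂ p = 1 ∧ 2 ≤ lineMult L p}, lineMult L p := by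
  classical
  rcases Nat.eq_zero_or_pos L.card with hz | hpos
  · rw [hz]; simp
  have hfin := multiple_finite L hL
  rw [finsum_mem_eq_finite_toFinset_sum _ hfin]
  choose h h0 hker using fun i : {ℓ // ℓ ∈ L} => exists_fun i.1 (hL i.1 i.2)
  obtain ⟨e0, e1, e2, he2, hs', ht', he20, d0, d1, hd12, hd11, hd02, hd01, hd00⟩ :=
    exists_frame h h0 (fun i j hij => by
      simp only [hker] at hij
      exact Subtype.ext hij)
  let s : {ℓ // ℓ ∈ L} → ℂ := fun i => -(h i e1 / h i e2)
  let t : {ℓ // ℓ ∈ L} → ℂ := fun i => -(h i e0 / h i e2)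
  have hs : Function.Injective s := by
    intro i j hij
    by_contra hne
    apply hs' i j hne
    have : h i e1 / h i e2 = h j e1 / h j e2 := neg_injective hij
    rw [div_eq_div_iff (he2 i) (he2 j)] at this
    linear_combination this
  have ht : Function.Injective t := by
    intro i j hij
    by_contra hne
    apply ht' i j hne
    have : h i e0 / h i e2 = h j e0 / h j e2 := neg_injective hij
    rw [div_eq_div_iff (he2 i) (he2 j)] at this
    linear_combination this
  let w : ℂ × ℂ → V3 := fun p => e0 + p.1 • e1 + p.2 • e2
  have hdw : ∀ p, d0 (w p) = d0 e0 := by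
    intro p; simp [w, hd01, hd02]
  have hw0 : ∀ p, w p ≠ 0 := by
    intro p hp
    apply hd00
    rw [← hdw p, hp, map_zero]
  let pt : ℂ × ℂ → Submodule ℂ V3 := fun p => Submodule.span ℂ {w p}
  have hpt1 : ∀ p, Module.finrank ℂ (pt p) = 1 := fun p => finrank_span_singleton (hw0 p)
  have hptinj : Function.Injective pt := by
    intro p q hpq
    have hmem : w p ∈ Submodule.span ℂ {w q} := by
      rw [show Submodule.span ℂ {w q} = pt p from hpq.symm]
      exact Submodule.mem_span_singleton_self _
    obtain ⟨c, hc⟩ := Submodule.mem_span_singleton.1 hmem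
    have hc1 : c = 1 := by
      have := congrArg d0 hc
      rw [map_smul, hdw, hdw, smul_eq_mul] at this
      exact (mul_eq_right₀ hd00).1 this
    rw [hc1, one_smul] at hc
    have h1 : q.1 = p.1 := by
      have := congrArg d1 hc
      simp only [w, map_add, map_smul, smul_eq_mul, hd12, mul_zero, add_zero] at this
      exact mul_right_cancel₀ hd11 (add_left_cancel this)
    have h2 : q.2 = p.2 := by
      simp only [w, h1] at hc
      exact smul_left_injective ℂ he20 (add_left_cancel hc)
    exact (Prod.ext h1 h2).symm
  have hmu : ∀ p, mu s t p = lineMult L (pt p) := by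
    intro p
    have e : {ℓ : Submodule ℂ V3 | ℓ ∈ L ∧ pt p ≤ ℓ} =
        ((on s t p).map (Function.Embedding.subtype _) : Finset (Submodule ℂ V3)) := by
      ext ℓ
      simp only [Set.mem_setOf_eq, Finset.coe_map, Set.mem_image, Finset.mem_coe, mem_on,
        Function.Embedding.subtype_apply]
      have key : ∀ i : {ℓ // ℓ ∈ L}, pt p ≤ i.1 ↔ p.2 = s i * p.1 + t i := by
        intro i
        rw [Submodule.span_singleton_le_iff_mem, ← hker i, LinearMap.mem_ker]
        simp only [w, map_add, map_smul, smul_eq_mul, s, t]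
        have := he2 i
        constructor
        · intro hh
          field_simp
          linear_combination hh
        · intro hh
          field_simp at hh
          linear_combination hh
      constructor
      · rintro ⟨h1, h2⟩
        exact ⟨⟨ℓ, h1⟩, (key ⟨ℓ, h1⟩).1 h2, rfl⟩
      · rintro ⟨i, h1, rfl⟩
        exact ⟨i.2, (key i).2 h1⟩
    rw [lineMult, e, Set.ncard_coe_finset, Finset.card_map, mu]
  have hcard : Fintype.card {ℓ // ℓ ∈ L} = L.card := Fintype.card_coe L
  have hmain := affine_ineq s t hs ht (by omega) (fun p => by
    rw [hmu, hcard]; exact hmult _ (hpt1 p))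
  rw [hcard] at hmain
  refine hmain.trans (Nat.mul_le_mul_left 3 ?_)
  rw [Finset.sum_congr rfl (fun p _ => hmu p),
    ← Finset.sum_image (f := fun q => lineMult L q) (fun p _ q _ hpq => hptinj hpq)]
  apply Finset.sum_le_sum_of_subset
  intro q hq
  obtain ⟨p, hp, rfl⟩ := Finset.mem_image.1 hq
  rw [Set.Finite.mem_toFinset]
  exact ⟨hpt1 p, by rw [← hmu]; exact (mem_PP s t hs p).1 hp⟩

end LineArr

/-- The Corollary of Section 7.5 of the paper: if every point of `ℂP²` lies on
fewer than `2N/3` of the `N` lines of an arrangement `L`, then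
`3·∑_{p : μ(p) ≥ 2} μ(p) ≥ N² + 3N`. -/
theorem total_multiplicity_lower_bound
    (L : Finset (Submodule ℂ (Fin 3 → ℂ)))
    (hL : ∀ ℓ ∈ L, Module.finrank ℂ ℓ = 2)
    (hmult : ∀ p : Submodule ℂ (Fin 3 → ℂ), Module.finrank ℂ p = 1 →
      3 * lineMult L p < 2 * L.card) :
    L.card ^ 2 + 3 * L.card ≤
      3 * ∑ᶠ p ∈ {p : Submodule ℂ (Fin 3 → ℂ) |
        Module.finrank ℂ p = 1 ∧ 2 ≤ lineMult L p}, lineMult L p := by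
  exact LineArr.transfer L hL hmult
end

section
/- Let L be a finite set of pairwise distinct lines in ℂP² (2-dimensional ℂ-subspaces of ℂ³) with at least two elements, and let β : L → ℝ be weights satisfying: 0 < βℓ < 1 for all ℓ, Σ_{ℓ∈L}(βℓ − 1) = −3, and Σ_{ℓ∈L, p ≤ ℓ}(βℓ − 1) > −2 for every point p with μ(p) ≥ 3. For each point p with μ(p) ≥ 3 set α(p) := 1 + (1/2)·Σ_{ℓ∈L, p≤ℓ}(βℓ − 1), and let k be the number of points p with μ(p) ≥ 3. Let N be a positive integer such that N·α(p) > k for every point p with μ(p) ≥ 3, and N·(βℓ + βℓ') > 2k for all distinct ℓ, ℓ' ∈ L. Then for every point x of ℂP²: Σ_{ℓ∈L, ¬(x ≤ ℓ)} (1 − βℓ) > 1 + 2k/N. -/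
/-- The number `α(p) = 1 + (1/2)·∑_{ℓ ∋ p} (βℓ − 1)`, the conical angle
parameter at a multiple point `p` of the weighted arrangement. -/
noncomputable def alphaPt (L : Finset (Submodule ℂ (Fin 3 → ℂ)))
    (β : Submodule ℂ (Fin 3 → ℂ) → ℝ) (p : Submodule ℂ (Fin 3 → ℂ)) : ℝ :=
  1 + (1 / 2) * ∑ᶠ ℓ ∈ {ℓ : Submodule ℂ (Fin 3 → ℂ) | ℓ ∈ L ∧ p ≤ ℓ}, (β ℓ - 1)

/-- Part (1) of Lemma 7.5 of the paper: under the hypotheses of the existence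
theorem, for `k` the number of points of multiplicity at least `3` and `N` a
positive integer with `N·α(p) > k` at every such point and `N·(βℓ + βℓ') > 2k`
for distinct lines, every point `x` of `ℂP²` satisfies
`∑_{ℓ ∌ x} (1 − βℓ) > 1 + 2k/N`. -/
theorem sum_over_lines_missing_point_gt
    (L : Finset (Submodule ℂ (Fin 3 → ℂ)))
    (hL : ∀ ℓ ∈ L, Module.finrank ℂ ℓ = 2)
    (hcard : 2 ≤ L.card)
    (β : Submodule ℂ (Fin 3 → ℂ) → ℝ)
    (hβ : ∀ ℓ ∈ L, 0 < β ℓ ∧ β ℓ < 1)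
    (hsum : ∑ ℓ ∈ L, (β ℓ - 1) = -3)
    (htriple : ∀ p : Submodule ℂ (Fin 3 → ℂ), Module.finrank ℂ p = 1 →
      3 ≤ lineMult L p →
      (∑ᶠ ℓ ∈ {ℓ : Submodule ℂ (Fin 3 → ℂ) | ℓ ∈ L ∧ p ≤ ℓ}, (β ℓ - 1)) > -2)
    (k : ℕ)
    (hk : k = Set.ncard {p : Submodule ℂ (Fin 3 → ℂ) |
      Module.finrank ℂ p = 1 ∧ 3 ≤ lineMult L p})
    (N : ℕ) (hN : 0 < N)
    (hNalpha : ∀ p : Submodule ℂ (Fin 3 → ℂ), Module.finrank ℂ p = 1 →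
      3 ≤ lineMult L p → (k : ℝ) < (N : ℝ) * alphaPt L β p)
    (hNbeta : ∀ ℓ ∈ L, ∀ ℓ' ∈ L, ℓ ≠ ℓ' →
      (2 * k : ℝ) < (N : ℝ) * (β ℓ + β ℓ')) :
    ∀ x : Submodule ℂ (Fin 3 → ℂ), Module.finrank ℂ x = 1 →
      1 + 2 * (k : ℝ) / (N : ℝ) <
        ∑ᶠ ℓ ∈ {ℓ : Submodule ℂ (Fin 3 → ℂ) | ℓ ∈ L ∧ ¬ x ≤ ℓ}, (1 - β ℓ) := by
  classical
  intro x hx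
  have hNpos : (0 : ℝ) < N := by exact_mod_cast hN
  have e1 : {ℓ : Submodule ℂ (Fin 3 → ℂ) | ℓ ∈ L ∧ x ≤ ℓ} =
      ((L.filter (fun ℓ => x ≤ ℓ) : Finset _) : Set (Submodule ℂ (Fin 3 → ℂ))) := by
    ext ℓ; simp
  have e2 : {ℓ : Submodule ℂ (Fin 3 → ℂ) | ℓ ∈ L ∧ ¬ x ≤ ℓ} =
      ((L.filter (fun ℓ => ¬ x ≤ ℓ) : Finset _) : Set (Submodule ℂ (Fin 3 → ℂ))) := by
    ext ℓ; simp
  rw [e2, finsum_mem_coe_finset]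
  have hsplit := Finset.sum_filter_add_sum_filter_not L (fun ℓ => x ≤ ℓ) (fun ℓ => 1 - β ℓ)
  have hneg : ∀ S : Finset (Submodule ℂ (Fin 3 → ℂ)),
      ∑ ℓ ∈ S, (β ℓ - 1) = - ∑ ℓ ∈ S, (1 - β ℓ) := by
    intro S
    rw [← Finset.sum_neg_distrib]
    exact Finset.sum_congr rfl (fun _ _ => by ring)
  rw [hneg] at hsum
  by_cases h3 : 3 ≤ lineMult L x
  · have h := hNalpha x hx h3
    unfold alphaPt at h
    rw [e1, finsum_mem_coe_finset, hneg, mul_comm, ← div_lt_iff₀ hNpos] at h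
    rw [mul_div_assoc]
    linarith
  · have hc : (L.filter (fun ℓ => x ≤ ℓ)).card ≤ 2 := by
      unfold lineMult at h3
      rw [e1, Set.ncard_coe_finset] at h3
      omega
    obtain ⟨T, hST, hTL, hT⟩ :=
      Finset.exists_subsuperset_card_eq (Finset.filter_subset (fun ℓ => x ≤ ℓ) L) hc hcard
    obtain ⟨a, b, hab, rfl⟩ := Finset.card_eq_two.mp hT
    have hle : ∑ ℓ ∈ L.filter (fun ℓ => x ≤ ℓ), (1 - β ℓ) ≤ ∑ ℓ ∈ {a, b}, (1 - β ℓ) :=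
      Finset.sum_le_sum_of_subset_of_nonneg hST
        (fun i hi _ => by linarith [(hβ i (hTL hi)).2])
    rw [Finset.sum_pair hab] at hle
    have h := hNbeta a (hTL (by simp)) b (hTL (by simp)) hab
    rw [mul_comm (N : ℝ), ← div_lt_iff₀ hNpos] at h
    linarith
end

section
/- Let M be a ℂ-linear endomorphism of ℂ³ such that for every c ∈ ℂ the eigenspace ker(M − c·id) has dimension at most 1. Then M has at most three invariant 2-dimensional subspaces: there exist ℂ-subspaces W₁, W₂, W₃ of ℂ³ such that every 2-dimensional ℂ-subspace W ⊆ ℂ³ with M(W) ⊆ W equals W₁, W₂ or W₃. -/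
/-- Part (2) of Lemma 7.5 of the paper, in linear-algebra form: a
`ℂ`-endomorphism of `ℂ³` all of whose eigenspaces have dimension at most one
has at most three invariant 2-dimensional subspaces. (A holomorphic vector
field on `ℂP²` with isolated zeros is tangent to at most 3 lines.) -/
theorem at_most_three_invariant_planes
    (M : (Fin 3 → ℂ) →ₗ[ℂ] (Fin 3 → ℂ))
    (h : ∀ c : ℂ, Module.finrank ℂ (Module.End.eigenspace M c) ≤ 1) :
    ∃ W₁ W₂ W₃ : Submodule ℂ (Fin 3 → ℂ),
      ∀ W : Submodule ℂ (Fin 3 → ℂ), Module.finrank ℂ W = 2 →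
        W.map M ≤ W → (W = W₁ ∨ W = W₂ ∨ W = W₃) := by
  have hcard : Multiset.card M.charpoly.roots = 3 := by
    rw [IsAlgClosed.card_roots_eq_natDegree, LinearMap.charpoly_natDegree]
    simp
  obtain ⟨a, b, d, habd⟩ := Multiset.card_eq_three.1 hcard
  refine ⟨LinearMap.range (M - algebraMap ℂ (Module.End ℂ (Fin 3 → ℂ)) a),
    LinearMap.range (M - algebraMap ℂ (Module.End ℂ (Fin 3 → ℂ)) b),
    LinearMap.range (M - algebraMap ℂ (Module.End ℂ (Fin 3 → ℂ)) d), ?_⟩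
  intro W hW hM
  have hq : Module.finrank ℂ ((Fin 3 → ℂ) ⧸ W) = 1 := by
    have := W.finrank_quotient_add_finrank
    simp [hW] at this
    omega
  obtain ⟨q, hq0, hqs⟩ := finrank_eq_one_iff'.1 hq
  have hM' : W ≤ W.comap M := Submodule.map_le_iff_le_comap.1 hM
  obtain ⟨c, hc⟩ := hqs (W.mapQ W M hM' q)
  have hle : LinearMap.range (M - algebraMap ℂ (Module.End ℂ (Fin 3 → ℂ)) c) ≤ W := by
    rintro _ ⟨x, rfl⟩
    obtain ⟨t, ht⟩ := hqs (W.mkQ x)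
    have h1 : W.mkQ (M x) = c • W.mkQ x := by
      have : W.mkQ (M x) = W.mapQ W M hM' (W.mkQ x) := by simp
      rw [this, ← ht, map_smul, ← hc, smul_comm]
    rw [← W.ker_mkQ, LinearMap.mem_ker, LinearMap.sub_apply, map_sub, h1,
      Module.algebraMap_end_apply, map_smul, sub_self]
  have hrn := LinearMap.finrank_range_add_finrank_ker
    (M - algebraMap ℂ (Module.End ℂ (Fin 3 → ℂ)) c)
  have hk := h c
  rw [Module.End.eigenspace_def, ← Algebra.algebraMap_eq_smul_one] at hk
  have h3 : Module.finrank ℂ (Fin 3 → ℂ) = 3 := by simp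
  have hfle := Submodule.finrank_mono hle
  have heq := Submodule.eq_of_le_of_finrank_le hle (by omega)
  have hev : Module.End.HasEigenvalue M c := by
    rw [Module.End.hasEigenvalue_iff, Module.End.eigenspace_def, ← Algebra.algebraMap_eq_smul_one]
    intro h0
    rw [h0, finrank_bot] at hrn
    omega
  have hroot : c ∈ M.charpoly.roots := by
    rw [Polynomial.mem_roots M.charpoly_monic.ne_zero]
    exact Module.End.hasEigenvalue_iff_isRoot_charpoly M c |>.1 hev
  rw [habd] at hroot
  simp only [Multiset.insert_eq_cons, Multiset.mem_cons, Multiset.mem_singleton] at hroot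
  rcases hroot with rfl | rfl | rfl
  · exact Or.inl heq.symm
  · exact Or.inr (Or.inl heq.symm)
  · exact Or.inr (Or.inr heq.symm)
end
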